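/- Let ℓ ≥ 1 be a real number, let k be a positive integer, and let f : ℤ≥1 → ℝ≥0 be a positive arithmetic function such that f(mn) ≤ τ_k(m) f(n) for all positive integers m, n. Set A_k := 125^k · 1092/k^3, B_{k,ℓ} := (1/2) e^{4/e} k^{20ℓ}, C_{k,ℓ} := (10ℓ(k−1))^{k^{16ℓ}(k−1)}, D_{k,ℓ} := A_k · max(A_k, 2k^{5ℓA_k}) + (2A_k)^{−A_k/4} e^{B_{k,ℓ}/e} k^{5ℓB_{k,ℓ}} · δ + 5 where δ = 1 if A_k < B_{k,ℓ} and δ = 0 otherwise, and Λ(k,ℓ) := 12ℓ k^{6ℓ} + 5ℓ C_{k,ℓ} + 9ℓ D_{k,ℓ}. Then, uniformly for all real x ≥ exp(7^{28} (12eℓ)^{28 log(192eℓ)}) and all real y with x^{1/ℓ} ≤ y ≤ x, one has ∑_{x−y < n ≤ x} f(n) ≤ Λ(k,ℓ) · (y / log x) · ∑_{n ≤ x} f(n)/n. -/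

import Mathlib

/-- The `k`-fold Piltz divisor function: `piltz k n` is the number of ordered
`k`-tuples of positive integers whose product is `n` (Dirichlet `k`-th power of ζ). -/
def piltz (k n : ℕ) : ℕ := ((ArithmeticFunction.zeta : ArithmeticFunction ℕ) ^ k) n

noncomputable def Ak (k : ℕ) : ℝ := 125 ^ k * 1092 / k ^ 3

noncomputable def Bkl (k : ℕ) (ℓ : ℝ) : ℝ :=
  (1 / 2) * Real.exp (4 / Real.exp 1) * (k : ℝ) ^ (20 * ℓ)

noncomputable def Ckl (k : ℕ) (ℓ : ℝ) : ℝ :=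
  (10 * ℓ * ((k : ℝ) - 1)) ^ ((k : ℝ) ^ (16 * ℓ) * ((k : ℝ) - 1))

noncomputable def Dkl (k : ℕ) (ℓ : ℝ) : ℝ :=
  Ak k * max (Ak k) (2 * (k : ℝ) ^ (5 * ℓ * Ak k)) +
    (2 * Ak k) ^ (-(Ak k) / 4) * Real.exp (Bkl k ℓ / Real.exp 1) *
      (k : ℝ) ^ (5 * ℓ * Bkl k ℓ) * (if Ak k < Bkl k ℓ then 1 else 0) + 5

noncomputable def Lam (k : ℕ) (ℓ : ℝ) : ℝ :=
  12 * ℓ * (k : ℝ) ^ (6 * ℓ) + 5 * ℓ * Ckl k ℓ + 9 * ℓ * Dkl k ℓ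

section Piltz

theorem piltz_isMultiplicative (k : ℕ) :
    ((ArithmeticFunction.zeta : ArithmeticFunction ℕ) ^ k).IsMultiplicative :=
  ArithmeticFunction.isMultiplicative_zeta.pow

theorem piltz_zero_prime_pow {p : ℕ} (hp : p.Prime) (j : ℕ) :
    piltz 0 (p ^ j) = if j = 0 then 1 else 0 := by
  rw [piltz, pow_zero, ArithmeticFunction.one_apply]
  simp [hp.ne_one]

theorem piltz_succ_prime_pow {p : ℕ} (hp : p.Prime) (k j : ℕ) :
    piltz (k + 1) (p ^ j) = ∑ i ∈ Finset.range (j + 1), piltz k (p ^ i) := by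
  rw [piltz, pow_succ, ArithmeticFunction.mul_zeta_apply, Nat.sum_divisors_prime_pow hp]
  rfl

theorem piltz_eq_prod_factorization (k : ℕ) {n : ℕ} (hn : n ≠ 0) :
    piltz k n = n.factorization.prod fun p j => piltz k (p ^ j) :=
  ArithmeticFunction.IsMultiplicative.multiplicative_factorization _ (piltz_isMultiplicative k) hn

theorem piltz_prime_pow_le_pow {p : ℕ} (hp : p.Prime) (k j : ℕ) :
    piltz k (p ^ j) ≤ k ^ j := by
  induction k generalizing j with
  | zero =>
    rw [piltz_zero_prime_pow hp]
    split_ifs with h <;> simp [h]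
  | succ k ih =>
    rw [piltz_succ_prime_pow hp, add_pow]
    refine Finset.sum_le_sum fun i hi => (ih i).trans ?_
    rw [one_pow, mul_one]
    exact Nat.le_mul_of_pos_right _ (Nat.choose_pos (Finset.mem_range_succ_iff.mp hi))

theorem piltz_prime_pow_le_succ_pow {p : ℕ} (hp : p.Prime) (k j : ℕ) :
    piltz k (p ^ j) ≤ (j + 1) ^ k := by
  induction k generalizing j with
  | zero =>
    rw [piltz_zero_prime_pow hp]
    split_ifs <;> simp
  | succ k ih =>
    rw [piltz_succ_prime_pow hp, pow_succ']
    refine (Finset.sum_le_card_nsmul _ _ ((j + 1) ^ k) fun i hi => (ih i).trans ?_).trans ?_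
    · exact Nat.pow_le_pow_left (Finset.mem_range.mp hi) k
    · simp

/-- The generating series of `j ↦ τ_k (p ^ j)` is dominated by `(1 - q)⁻ᵏ`. -/
theorem sum_piltz_prime_pow_mul_pow_le {p : ℕ} (hp : p.Prime) {q : ℝ} (hq : 0 ≤ q) (hq1 : q < 1)
    (k J : ℕ) : ∑ j ∈ Finset.range J, (piltz k (p ^ j) : ℝ) * q ^ j ≤ ((1 - q)⁻¹) ^ k := by
  have h1q : 0 < 1 - q := by linarith
  induction k with
  | zero =>
    calc ∑ j ∈ Finset.range J, (piltz 0 (p ^ j) : ℝ) * q ^ j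
        = ∑ j ∈ Finset.range J, if j = 0 then (1 : ℝ) else 0 := by
          refine Finset.sum_congr rfl fun j _ => ?_
          rw [piltz_zero_prime_pow hp]
          split_ifs with h <;> simp [h]
      _ ≤ ((1 - q)⁻¹) ^ 0 := by
          rw [Finset.sum_ite_eq', pow_zero]
          split_ifs <;> norm_num
  | succ k ih =>
    have hnn : ∀ i, 0 ≤ (piltz k (p ^ i) : ℝ) * q ^ i := fun i => by positivity
    calc ∑ j ∈ Finset.range J, (piltz (k + 1) (p ^ j) : ℝ) * q ^ j
        = ∑ j ∈ Finset.range J, ∑ i ∈ Finset.range (j + 1),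
            ((piltz k (p ^ i) : ℝ) * q ^ i) * q ^ (j - i) := by
          refine Finset.sum_congr rfl fun j _ => ?_
          rw [piltz_succ_prime_pow hp, Nat.cast_sum, Finset.sum_mul]
          refine Finset.sum_congr rfl fun i hi => ?_
          rw [mul_assoc, ← pow_add, Nat.add_sub_cancel' (Finset.mem_range_succ_iff.mp hi)]
      _ = ∑ i ∈ Finset.range J, ∑ j ∈ Finset.Ico i J,
            ((piltz k (p ^ i) : ℝ) * q ^ i) * q ^ (j - i) := by
          refine Finset.sum_comm' fun j i => ?_
          simp only [Finset.mem_range, Finset.mem_Ico]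
          omega
      _ ≤ ∑ i ∈ Finset.range J, ((piltz k (p ^ i) : ℝ) * q ^ i) * (1 - q)⁻¹ := by
          refine Finset.sum_le_sum fun i _ => ?_
          rw [← Finset.mul_sum, Finset.sum_Ico_eq_sum_range]
          refine mul_le_mul_of_nonneg_left ?_ (hnn i)
          simp only [Nat.add_sub_cancel_left]
          rw [← tsum_geometric_of_lt_one hq hq1]
          exact (summable_geometric_of_lt_one hq hq1).sum_le_tsum _ fun _ _ => pow_nonneg hq _
      _ ≤ ((1 - q)⁻¹) ^ (k + 1) := by
          rw [← Finset.sum_mul, pow_succ]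
          exact mul_le_mul_of_nonneg_right ih (by positivity)

theorem piltz_le_pow_cardFactors (k : ℕ) {n : ℕ} (hn : n ≠ 0) :
    piltz k n ≤ k ^ ArithmeticFunction.cardFactors n := by
  rw [piltz_eq_prod_factorization k hn, ArithmeticFunction.cardFactors_eq_sum_factorization,
    Finsupp.prod, Finsupp.sum, ← Finset.prod_pow_eq_pow_sum]
  exact Finset.prod_le_prod' fun p hp =>
    piltz_prime_pow_le_pow (Nat.prime_of_mem_primeFactors hp) k _

theorem piltz_prime_pow_le_rpow_mul {k p : ℕ} (hk : 0 < k) (hp : p.Prime) {ε : ℝ} (hε : 0 < ε)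
    (hε1 : ε ≤ 1) (j : ℕ) :
    (piltz k (p ^ j) : ℝ) ≤ (3 / 2 * k / ε) ^ k * ((p : ℝ) ^ j) ^ ε := by
  have hk' : (1 : ℝ) ≤ k := by exact_mod_cast hk
  have hp2 : (2 : ℝ) ≤ p := by exact_mod_cast hp.two_le
  have hlog : (2 : ℝ) / 3 ≤ Real.log p := by
    linarith [Real.log_two_gt_d9, Real.log_le_log two_pos hp2]
  have hM : 1 ≤ 3 / 2 * k / ε := by
    rw [le_div_iff₀ hε]; linarith
  have key : (j : ℝ) + 1 ≤ 3 / 2 * k / ε * Real.exp (j * (ε / k) * Real.log p) := by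
    have h1 := Real.add_one_le_exp (j * (ε / k) * Real.log p)
    have h2 : (j : ℝ) ≤ 3 / 2 * k / ε * (j * (ε / k) * Real.log p) := by
      have : 3 / 2 * k / ε * (j * (ε / k) * Real.log p) = j * (3 / 2 * Real.log p) := by
        field_simp
      rw [this]
      exact le_mul_of_one_le_right (by positivity) (by linarith)
    nlinarith [mul_le_mul_of_nonneg_left h1 (show 0 ≤ 3 / 2 * k / ε by positivity)]
  calc (piltz k (p ^ j) : ℝ) ≤ ((j : ℝ) + 1) ^ k := by
        exact_mod_cast piltz_prime_pow_le_succ_pow hp k j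
    _ ≤ (3 / 2 * k / ε * Real.exp (j * (ε / k) * Real.log p)) ^ k := by gcongr
    _ = (3 / 2 * k / ε) ^ k * ((p : ℝ) ^ j) ^ ε := by
        rw [mul_pow, ← Real.exp_nat_mul, Real.rpow_def_of_pos (by positivity), Real.log_pow]
        congr 2
        field_simp

theorem piltz_le_rpow_mul {k n : ℕ} (hk : 0 < k) (hn : n ≠ 0) {ε : ℝ} (hε : 0 < ε)
    (hε1 : ε ≤ 1) :
    (piltz k n : ℝ) ≤ (3 / 2 * k / ε) ^ (k * (k : ℝ) ^ (1 / ε)) * (n : ℝ) ^ ε := by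
  have hk' : (1 : ℝ) ≤ k := by exact_mod_cast hk
  set M : ℝ := 3 / 2 * k / ε with hMdef
  have hM : 1 ≤ M := by
    rw [hMdef, le_div_iff₀ hε]; linarith
  set P : ℝ := (k : ℝ) ^ (1 / ε) with hP
  have hP0 : 0 ≤ P := by positivity
  have hfac : ∀ p ∈ n.primeFactors, (piltz k (p ^ n.factorization p) : ℝ) ≤
      (if p ≤ ⌊P⌋₊ then M ^ k else 1) * ((p : ℝ) ^ n.factorization p) ^ ε := by
    intro p hp
    have hpp := Nat.prime_of_mem_primeFactors hp
    split_ifs with h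
    · exact piltz_prime_pow_le_rpow_mul hk hpp hε hε1 _
    · rw [one_mul]
      have hPp : P ≤ p := (Nat.lt_of_floor_lt (not_le.mp h)).le
      have hkp : (k : ℝ) ≤ (p : ℝ) ^ ε := by
        calc (k : ℝ) = P ^ ε := by
              rw [hP, ← Real.rpow_mul (by positivity), one_div_mul_cancel hε.ne', Real.rpow_one]
          _ ≤ (p : ℝ) ^ ε := Real.rpow_le_rpow hP0 hPp hε.le
      calc (piltz k (p ^ n.factorization p) : ℝ) ≤ (k : ℝ) ^ n.factorization p := by
            exact_mod_cast piltz_prime_pow_le_pow hpp k _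
        _ ≤ ((p : ℝ) ^ ε) ^ n.factorization p := by gcongr
        _ = ((p : ℝ) ^ n.factorization p) ^ ε := by
            rw [← Real.rpow_mul_natCast (by positivity), ← Real.rpow_natCast_mul (by positivity),
              mul_comm]
  have hcard : ∏ p ∈ n.primeFactors, (if p ≤ ⌊P⌋₊ then M ^ k else 1) ≤ M ^ (k * P) := by
    rw [Finset.prod_ite, Finset.prod_const, Finset.prod_const_one, mul_one, ← pow_mul,
      ← Real.rpow_natCast]
    refine Real.rpow_le_rpow_of_exponent_le hM ?_
    push_cast
    refine mul_le_mul_of_nonneg_left ((Nat.le_floor_iff hP0).mp ?_) (by positivity)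
    refine (Finset.card_le_card (t := Finset.Icc 1 ⌊P⌋₊) fun p hp => ?_).trans (by simp)
    rw [Finset.mem_filter] at hp
    exact Finset.mem_Icc.mpr ⟨(Nat.prime_of_mem_primeFactors hp.1).one_le, hp.2⟩
  calc (piltz k n : ℝ) = ∏ p ∈ n.primeFactors, (piltz k (p ^ n.factorization p) : ℝ) := by
        rw [piltz_eq_prod_factorization k hn, Finsupp.prod, Nat.cast_prod]; rfl
    _ ≤ ∏ p ∈ n.primeFactors,
          (if p ≤ ⌊P⌋₊ then M ^ k else 1) * ((p : ℝ) ^ n.factorization p) ^ ε :=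
        Finset.prod_le_prod (fun _ _ => by positivity) hfac
    _ = (∏ p ∈ n.primeFactors, (if p ≤ ⌊P⌋₊ then M ^ k else 1)) * (n : ℝ) ^ ε := by
        rw [Finset.prod_mul_distrib, Real.finsetProd_rpow _ _ (fun _ _ => by positivity)]
        congr 2
        conv_rhs => rw [← Nat.prod_factorization_pow_eq_self hn, Finsupp.prod]
        push_cast
        rfl
    _ ≤ _ := by gcongr

end Piltz

section Mertens

/-- An upper bound in Mertens' first theorem. -/
theorem sum_log_prime_div_le {w : ℝ} (hw : 1 ≤ w) :
    ∑ p ∈ (Finset.Icc 1 ⌊w⌋₊).filter Nat.Prime, Real.log p / p ≤ Real.log w + Real.log 4 := by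
  set N := ⌊w⌋₊ with hN
  have hN1 : 1 ≤ N := (Nat.one_le_floor_iff w).mpr hw
  have hN0 : (0 : ℝ) < N := by exact_mod_cast hN1
  set s := (Finset.Icc 1 N).filter Nat.Prime
  have hps : ∀ p ∈ s, p.Prime := fun p hp => (Finset.mem_filter.mp hp).2
  have hle : ∑ p ∈ s, ((N / p : ℕ) : ℝ) * Real.log p ≤ N * Real.log N := by
    have hsplit : ∀ n ∈ Finset.Icc 1 N,
        ∑ p ∈ s, (if p ∣ n then Real.log p else 0) ≤ Real.log N := by
      intro n hn
      obtain ⟨hn1, hnN⟩ := Finset.mem_Icc.mp hn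
      have hn0 : n ≠ 0 := by omega
      calc ∑ p ∈ s, (if p ∣ n then Real.log p else 0)
          = ∑ p ∈ s.filter (· ∣ n), Real.log p := (Finset.sum_filter _ _).symm
        _ ≤ ∑ p ∈ n.primeFactors, Real.log p := by
            refine Finset.sum_le_sum_of_subset_of_nonneg (fun p hp => ?_)
              fun p _ _ => Real.log_natCast_nonneg p
            rw [Finset.mem_filter] at hp
            exact Nat.mem_primeFactors.mpr ⟨hps p hp.1, hp.2, hn0⟩
        _ = Real.log ((∏ p ∈ n.primeFactors, p : ℕ) : ℝ) := by
            rw [Nat.cast_prod, Real.log_prod]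
            exact fun p hp => Nat.cast_ne_zero.mpr (Nat.prime_of_mem_primeFactors hp).ne_zero
        _ ≤ Real.log N := by
            refine Real.log_le_log ?_ ?_
            · exact_mod_cast Finset.prod_pos fun p hp => (Nat.prime_of_mem_primeFactors hp).pos
            · exact_mod_cast (Nat.le_of_dvd hn1 (Nat.prod_primeFactors_dvd n)).trans hnN
    calc ∑ p ∈ s, ((N / p : ℕ) : ℝ) * Real.log p
        = ∑ n ∈ Finset.Icc 1 N, ∑ p ∈ s, (if p ∣ n then Real.log p else 0) := by
          rw [Finset.sum_comm]
          refine Finset.sum_congr rfl fun p _ => ?_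
          rw [← Finset.sum_filter, Finset.sum_const, nsmul_eq_mul, ← Nat.Ioc_filter_dvd_card_eq_div]
          rfl
      _ ≤ N * Real.log N := by
          refine (Finset.sum_le_card_nsmul _ _ _ hsplit).trans ?_
          simp
  have htheta : ∑ p ∈ s, Real.log p ≤ Real.log 4 * N := by
    have := Chebyshev.theta_le_log4_mul_x (x := (N : ℝ)) hN0.le
    rw [Chebyshev.theta_eq_sum_Icc, Nat.floor_natCast] at this
    refine (Finset.sum_le_sum_of_subset_of_nonneg ?_ ?_).trans this
    · intro p hp
      simp only [s, Finset.mem_filter, Finset.mem_Icc] at hp ⊢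
      exact ⟨⟨by omega, hp.1.2⟩, hp.2⟩
    · intro p _ _
      exact Real.log_natCast_nonneg p
  have hmain : N * ∑ p ∈ s, Real.log p / p ≤ N * (Real.log N + Real.log 4) := by
    calc N * ∑ p ∈ s, Real.log p / p
        ≤ ∑ p ∈ s, (((N / p : ℕ) : ℝ) * Real.log p + Real.log p) := by
          rw [Finset.mul_sum]
          refine Finset.sum_le_sum fun p hp => ?_
          have hlt : (N : ℝ) / p < ((N / p : ℕ) : ℝ) + 1 := by
            rw [← Nat.floor_div_eq_div (K := ℝ)]
            exact Nat.lt_floor_add_one _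
          have := mul_le_mul_of_nonneg_right hlt.le (Real.log_natCast_nonneg p)
          calc (N : ℝ) * (Real.log p / p) = N / p * Real.log p := by ring
            _ ≤ _ := by linarith
      _ ≤ N * (Real.log N + Real.log 4) := by
          rw [Finset.sum_add_distrib]; linarith
  have := le_of_mul_le_mul_left hmain hN0
  have hNw : Real.log N ≤ Real.log w :=
    Real.log_le_log hN0 (Nat.floor_le (by linarith))
  linarith

end Mertens

section Sieve

/-- The density weights `μ²(e) / φ(e)` of Selberg's sieve. -/
noncomputable def selbergDensity (e : ℕ) : ℝ :=
  if Squarefree e then ((Nat.totient e : ℝ))⁻¹ else 0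

/-- The normalising sum of Selberg's sieve of level `N`. -/
noncomputable def selbergSum (N : ℕ) : ℝ := ∑ e ∈ Finset.Icc 1 N, selbergDensity e

/-- Selberg's sieve weights of level `N`. -/
noncomputable def selbergWeight (N d : ℕ) : ℝ :=
  d * ArithmeticFunction.moebius d / selbergSum N *
    ∑ e ∈ (Finset.Icc 1 N).filter (d ∣ ·), selbergDensity e

theorem selbergDensity_nonneg (e : ℕ) : 0 ≤ selbergDensity e := by
  unfold selbergDensity
  split_ifs <;> positivity

theorem one_le_selbergSum {N : ℕ} (hN : 1 ≤ N) : 1 ≤ selbergSum N := by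
  have h : selbergDensity 1 = 1 := by simp [selbergDensity]
  rw [← h]
  exact Finset.single_le_sum (fun e _ => selbergDensity_nonneg e)
    (Finset.mem_Icc.mpr ⟨le_rfl, hN⟩)

theorem selbergWeight_one {N : ℕ} (hN : 1 ≤ N) : selbergWeight N 1 = 1 := by
  have h := one_le_selbergSum hN
  have h0 : selbergSum N ≠ 0 := by linarith
  rw [selbergWeight, Finset.filter_true_of_mem (fun e _ => one_dvd e)]
  change _ * selbergSum N = 1
  simp [h0]

theorem abs_selbergWeight_le {N : ℕ} (hN : 1 ≤ N) (d : ℕ) : |selbergWeight N d| ≤ d := by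
  have h := one_le_selbergSum hN
  have h0 : 0 < selbergSum N := by linarith
  have hμ : |((ArithmeticFunction.moebius d : ℤ) : ℝ)| ≤ 1 := by
    exact_mod_cast ArithmeticFunction.abs_moebius_le_one
  have hsub : ∑ e ∈ (Finset.Icc 1 N).filter (d ∣ ·), selbergDensity e ≤ selbergSum N :=
    Finset.sum_le_sum_of_subset_of_nonneg (Finset.filter_subset _ _)
      fun e _ _ => selbergDensity_nonneg e
  have hnn : 0 ≤ ∑ e ∈ (Finset.Icc 1 N).filter (d ∣ ·), selbergDensity e :=
    Finset.sum_nonneg fun e _ => selbergDensity_nonneg e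
  rw [selbergWeight, abs_mul, abs_div, abs_mul, abs_of_pos h0, abs_of_nonneg hnn, Nat.abs_cast,
    div_mul_eq_mul_div, div_le_iff₀ h0]
  calc (d : ℝ) * |((ArithmeticFunction.moebius d : ℤ) : ℝ)| *
        ∑ e ∈ (Finset.Icc 1 N).filter (d ∣ ·), selbergDensity e
      ≤ (d : ℝ) * 1 * selbergSum N := by gcongr
    _ = d * selbergSum N := by ring

theorem sum_moebius_of_dvd_of_squarefree {m e : ℕ} (he : Squarefree e) (hme : m ∣ e) :
    ∑ d ∈ e.divisors.filter (m ∣ ·), ArithmeticFunction.moebius d =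
      if m = e then ArithmeticFunction.moebius m else 0 := by
  obtain ⟨c, rfl⟩ := hme
  have hm0 : m ≠ 0 := fun h => he.ne_zero (by simp [h])
  have hc0 : c ≠ 0 := fun h => he.ne_zero (by simp [h])
  have hmap : (m * c).divisors.filter (m ∣ ·) = c.divisors.image (m * ·) := by
    ext d
    simp only [Finset.mem_filter, Nat.mem_divisors, Finset.mem_image]
    constructor
    · rintro ⟨⟨hd, -⟩, t, rfl⟩
      exact ⟨t, ⟨Nat.dvd_of_mul_dvd_mul_left (Nat.pos_of_ne_zero hm0) hd, hc0⟩, rfl⟩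
    · rintro ⟨t, ⟨ht, -⟩, rfl⟩
      exact ⟨⟨Nat.mul_dvd_mul_left m ht, mul_ne_zero hm0 hc0⟩, dvd_mul_right _ _⟩
  rw [hmap, Finset.sum_image fun a _ b _ h => Nat.eq_of_mul_eq_mul_left (Nat.pos_of_ne_zero hm0) h]
  have hcop : m.Coprime c := (Nat.squarefree_mul_iff.mp he).1
  calc ∑ t ∈ c.divisors, ArithmeticFunction.moebius (m * t)
      = ∑ t ∈ c.divisors, ArithmeticFunction.moebius m * ArithmeticFunction.moebius t := by
        refine Finset.sum_congr rfl fun t ht => ?_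
        exact ArithmeticFunction.isMultiplicative_moebius.map_mul_of_coprime
          (hcop.coprime_dvd_right (Nat.dvd_of_mem_divisors ht))
    _ = ArithmeticFunction.moebius m * if c = 1 then 1 else 0 := by
        rw [← Finset.mul_sum, ← ArithmeticFunction.coe_mul_zeta_apply,
          ArithmeticFunction.moebius_mul_coe_zeta, ArithmeticFunction.one_apply]
    _ = _ := by
        have : m = m * c ↔ c = 1 := by
          constructor
          · intro h
            exact Nat.eq_of_mul_eq_mul_left (Nat.pos_of_ne_zero hm0) (by omega)
          · rintro rfl; simp
        simp [this]

theorem sum_selbergWeight_div {N m : ℕ} (hm : m ∈ Finset.Icc 1 N) :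
    ∑ d ∈ (Finset.Icc 1 N).filter (m ∣ ·), selbergWeight N d / d =
      ArithmeticFunction.moebius m * selbergDensity m / selbergSum N := by
  calc ∑ d ∈ (Finset.Icc 1 N).filter (m ∣ ·), selbergWeight N d / d
      = ∑ d ∈ (Finset.Icc 1 N).filter (m ∣ ·), ∑ e ∈ (Finset.Icc 1 N).filter (d ∣ ·),
          (ArithmeticFunction.moebius d : ℝ) * (selbergDensity e / selbergSum N) := by
        refine Finset.sum_congr rfl fun d hd => ?_
        have hd0 : (d : ℝ) ≠ 0 := by
          have := (Finset.mem_Icc.mp (Finset.mem_filter.mp hd).1).1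
          exact_mod_cast (by omega : d ≠ 0)
        rw [selbergWeight, ← Finset.mul_sum, ← Finset.sum_div]
        field_simp
    _ = ∑ e ∈ Finset.Icc 1 N, ∑ d ∈ e.divisors.filter (m ∣ ·),
          (ArithmeticFunction.moebius d : ℝ) * (selbergDensity e / selbergSum N) := by
        refine Finset.sum_comm' fun d e => ?_
        simp only [Finset.mem_filter, Finset.mem_Icc, Nat.mem_divisors]
        constructor
        · rintro ⟨⟨⟨h1, h2⟩, h3⟩, ⟨h4, h5⟩, h6⟩
          exact ⟨⟨⟨h6, by omega⟩, h3⟩, h4, h5⟩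
        · rintro ⟨⟨⟨h1, h2⟩, h3⟩, h4, h5⟩
          exact ⟨⟨⟨Nat.pos_of_dvd_of_pos h1 h4, (Nat.le_of_dvd h4 h1).trans h5⟩, h3⟩, ⟨h4, h5⟩, h1⟩
    _ = ∑ e ∈ Finset.Icc 1 N, if m = e then
          ArithmeticFunction.moebius m * selbergDensity m / selbergSum N else 0 := by
        refine Finset.sum_congr rfl fun e _ => ?_
        rw [← Finset.sum_mul]
        by_cases he : Squarefree e
        · by_cases hme : m ∣ e
          · rw [← Int.cast_sum, sum_moebius_of_dvd_of_squarefree he hme]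
            split_ifs with h
            · subst h; ring
            · simp
          · have : e.divisors.filter (m ∣ ·) = ∅ := by
              refine Finset.filter_eq_empty_iff.mpr fun d hd h => hme ?_
              exact h.trans (Nat.dvd_of_mem_divisors hd)
            rw [this, if_neg (by rintro rfl; exact hme dvd_rfl)]
            simp
        · have h0 : selbergDensity e = 0 := if_neg he
          split_ifs with h
          · subst h; simp [h0]
          · simp [h0]
    _ = _ := by rw [Finset.sum_ite_eq, if_pos hm]

theorem sum_selbergWeight_mul_div_lcm {N : ℕ} (hN : 1 ≤ N) :
    ∑ d ∈ Finset.Icc 1 N, ∑ e ∈ Finset.Icc 1 N,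
      selbergWeight N d * selbergWeight N e / (Nat.lcm d e : ℝ) = (selbergSum N)⁻¹ := by
  have hS := one_le_selbergSum hN
  have hS0 : selbergSum N ≠ 0 := by linarith
  calc ∑ d ∈ Finset.Icc 1 N, ∑ e ∈ Finset.Icc 1 N,
        selbergWeight N d * selbergWeight N e / (Nat.lcm d e : ℝ)
      = ∑ d ∈ Finset.Icc 1 N, ∑ e ∈ Finset.Icc 1 N, ∑ m ∈ Finset.Icc 1 N,
          (Nat.totient m : ℝ) * ((if m ∣ d then selbergWeight N d / d else 0) *
            (if m ∣ e then selbergWeight N e / e else 0)) := by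
        refine Finset.sum_congr rfl fun d hd => Finset.sum_congr rfl fun e he => ?_
        obtain ⟨hd1, hdN⟩ := Finset.mem_Icc.mp hd
        obtain ⟨he1, heN⟩ := Finset.mem_Icc.mp he
        have hd0 : (d : ℝ) ≠ 0 := by exact_mod_cast (by omega : d ≠ 0)
        have he0 : (e : ℝ) ≠ 0 := by exact_mod_cast (by omega : e ≠ 0)
        have hl0 : (Nat.lcm d e : ℝ) ≠ 0 := by
          exact_mod_cast Nat.lcm_ne_zero (by omega) (by omega)
        have hgl : (Nat.gcd d e : ℝ) * Nat.lcm d e = d * e := by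
          exact_mod_cast Nat.gcd_mul_lcm d e
        have hg : ∑ m ∈ Finset.Icc 1 N, (if m ∣ d ∧ m ∣ e then (Nat.totient m : ℝ) else 0) =
            Nat.gcd d e := by
          rw [← Finset.sum_filter]
          conv_rhs => rw [← Nat.sum_totient (Nat.gcd d e)]
          push_cast
          refine Finset.sum_congr ?_ fun _ _ => rfl
          ext m
          simp only [Finset.mem_filter, Finset.mem_Icc, Nat.mem_divisors, ← Nat.dvd_gcd_iff]
          constructor
          · rintro ⟨-, h⟩
            exact ⟨h, Nat.gcd_ne_zero_left (by omega)⟩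
          · rintro ⟨h, -⟩
            have hmd := h.trans (Nat.gcd_dvd_left d e)
            exact ⟨⟨Nat.pos_of_dvd_of_pos hmd (by omega),
              (Nat.le_of_dvd (by omega) hmd).trans hdN⟩, h⟩
        calc selbergWeight N d * selbergWeight N e / (Nat.lcm d e : ℝ)
            = Nat.gcd d e * (selbergWeight N d / d * (selbergWeight N e / e)) := by
              field_simp
              rw [mul_assoc, ← hgl]
              ring
          _ = _ := by
              rw [← hg, Finset.sum_mul]
              refine Finset.sum_congr rfl fun m _ => ?_
              by_cases h1 : m ∣ d <;> by_cases h2 : m ∣ e <;> simp [h1, h2]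
    _ = ∑ m ∈ Finset.Icc 1 N, (Nat.totient m : ℝ) *
          (∑ d ∈ (Finset.Icc 1 N).filter (m ∣ ·), selbergWeight N d / d) ^ 2 := by
        rw [Finset.sum_congr rfl fun d _ => Finset.sum_comm, Finset.sum_comm]
        refine Finset.sum_congr rfl fun m _ => ?_
        rw [sq, Finset.sum_filter, Finset.sum_mul_sum, Finset.mul_sum]
        refine Finset.sum_congr rfl fun d _ => ?_
        rw [Finset.mul_sum]
    _ = ∑ m ∈ Finset.Icc 1 N, selbergDensity m / selbergSum N ^ 2 := by
        refine Finset.sum_congr rfl fun m hm => ?_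
        rw [sum_selbergWeight_div hm]
        by_cases h : Squarefree m
        · have hφ : (Nat.totient m : ℝ) ≠ 0 := by
            exact_mod_cast (Nat.totient_pos.mpr (Finset.mem_Icc.mp hm).1).ne'
          have hμ : ((ArithmeticFunction.moebius m : ℤ) : ℝ) ^ 2 = 1 := by
            exact_mod_cast ArithmeticFunction.moebius_sq_eq_one_of_squarefree h
          have hden : selbergDensity m = (Nat.totient m : ℝ)⁻¹ := if_pos h
          rw [hden]
          field_simp
          rw [hμ]
        · have h0 : selbergDensity m = 0 := if_neg h
          simp [h0]
    _ = _ := by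
        rw [← Finset.sum_div]
        change selbergSum N / _ = _
        field_simp

theorem log_le_two_mul_selbergSum (N : ℕ) : Real.log (N + 1) ≤ 2 * selbergSum N := by
  have hharm : Real.log (N + 1) ≤ ∑ n ∈ Finset.Icc 1 N, (n : ℝ)⁻¹ := by
    have := log_add_one_le_harmonic N
    rw [harmonic_eq_sum_Icc] at this
    push_cast at this
    exact this
  refine hharm.trans ?_
  choose a b hab ha using Nat.sq_mul_squarefree
  have hsq : ∑ q ∈ Finset.Icc 1 N, ((q : ℝ) ^ 2)⁻¹ ≤ 2 := by
    rcases Nat.eq_zero_or_pos N with rfl | hN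
    · simp
    have := sum_Ioc_inv_sq_le_sub (α := ℝ) one_ne_zero hN
    have hI : Finset.Icc 1 N = insert 1 (Finset.Ioc 1 N) := by
      ext; simp; omega
    rw [hI, Finset.sum_insert (by simp)]
    have hN' : (0 : ℝ) ≤ (N : ℝ)⁻¹ := by positivity
    norm_num at this ⊢
    linarith
  have hfib : ∑ n ∈ Finset.Icc 1 N, (n : ℝ)⁻¹ ≤
      ∑ q ∈ Finset.Icc 1 N ×ˢ Finset.Icc 1 N, ((q.1 : ℝ) ^ 2)⁻¹ * selbergDensity q.2 := by
    have hinj : Set.InjOn (fun n => (b n, a n)) (Finset.Icc 1 N : Finset ℕ) := by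
      intro n _ m _ h
      simp only [Prod.mk.injEq] at h
      rw [← hab n, ← hab m, h.1, h.2]
    calc ∑ n ∈ Finset.Icc 1 N, (n : ℝ)⁻¹
        ≤ ∑ n ∈ Finset.Icc 1 N, ((b n : ℝ) ^ 2)⁻¹ * selbergDensity (a n) := by
          refine Finset.sum_le_sum fun n _ => ?_
          have h1 : ((n : ℕ) : ℝ) = (b n : ℝ) ^ 2 * a n := by exact_mod_cast (hab n).symm
          have ha0 : 0 < a n := Nat.pos_of_ne_zero (ha n).ne_zero
          have h2 : selbergDensity (a n) = (Nat.totient (a n) : ℝ)⁻¹ := if_pos (ha n)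
          rw [h2, h1, mul_inv]
          refine mul_le_mul_of_nonneg_left ?_ (by positivity)
          refine inv_anti₀ ?_ ?_
          · exact_mod_cast Nat.totient_pos.mpr ha0
          · exact_mod_cast Nat.totient_le (a n)
      _ = ∑ q ∈ (Finset.Icc 1 N).image (fun n => (b n, a n)),
            ((q.1 : ℝ) ^ 2)⁻¹ * selbergDensity q.2 := by
          rw [Finset.sum_image hinj]
      _ ≤ _ := by
          refine Finset.sum_le_sum_of_subset_of_nonneg ?_ fun q _ _ =>
            mul_nonneg (by positivity) (selbergDensity_nonneg _)
          intro q hq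
          obtain ⟨n, hn, rfl⟩ := Finset.mem_image.mp hq
          obtain ⟨hn1, hnN⟩ := Finset.mem_Icc.mp hn
          have hb0 : 0 < b n := Nat.pos_of_ne_zero fun h => by
            have := hab n; rw [h] at this; simp at this; omega
          have ha0 : 0 < a n := Nat.pos_of_ne_zero (ha n).ne_zero
          have hbn : b n ≤ n := by
            calc b n ≤ b n ^ 2 * a n := by nlinarith [Nat.mul_pos hb0 ha0, sq (b n)]
              _ = n := hab n
          have han : a n ≤ n := by
            calc a n ≤ b n ^ 2 * a n := Nat.le_mul_of_pos_left _ (by positivity)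
              _ = n := hab n
          simp only [Finset.mem_product, Finset.mem_Icc]
          omega
  refine hfib.trans ?_
  rw [Finset.sum_product]
  dsimp only
  rw [← Finset.sum_mul_sum]
  exact mul_le_mul_of_nonneg_right hsq (Finset.sum_nonneg fun e _ => selbergDensity_nonneg e)

theorem abs_card_Ioc_filter_dvd_sub_le {u v : ℝ} (hu : 0 ≤ u) (huv : u ≤ v) {q : ℕ} (hq : 0 < q) :
    |(((Finset.Ioc ⌊u⌋₊ ⌊v⌋₊).filter (q ∣ ·)).card : ℝ) - (v - u) / q| ≤ 1 := by
  have hq' : (0 : ℝ) < q := by exact_mod_cast hq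
  have hle : ⌊u⌋₊ ≤ ⌊v⌋₊ := Nat.floor_le_floor huv
  have hcard : ((Finset.Ioc ⌊u⌋₊ ⌊v⌋₊).filter (q ∣ ·)).card + ⌊u⌋₊ / q = ⌊v⌋₊ / q := by
    rw [← Nat.Ioc_filter_dvd_card_eq_div, ← Nat.Ioc_filter_dvd_card_eq_div,
      ← Finset.Ioc_union_Ioc_eq_Ioc (Nat.zero_le _) hle, Finset.filter_union,
      Finset.card_union_of_disjoint, add_comm]
    refine Finset.disjoint_filter_filter ?_
    exact Finset.Ioc_disjoint_Ioc_of_le le_rfl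
  rw [← Nat.floor_div_natCast, ← Nat.floor_div_natCast] at hcard
  have hcard' : (((Finset.Ioc ⌊u⌋₊ ⌊v⌋₊).filter (q ∣ ·)).card : ℝ) =
      (⌊v / q⌋₊ : ℝ) - ⌊u / q⌋₊ := by
    rw [eq_sub_iff_add_eq]; exact_mod_cast hcard
  have h1 := Nat.floor_le (div_nonneg hu hq'.le)
  have h2 := Nat.floor_le (div_nonneg (hu.trans huv) hq'.le)
  have h3 := Nat.lt_floor_add_one (u / q)
  have h4 := Nat.lt_floor_add_one (v / q)
  rw [hcard', sub_div, abs_le]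
  constructor <;> linarith

/-- Selberg's upper bound sieve for an interval. -/
theorem card_le_of_forall_prime_dvd_lt {u v : ℝ} (hu : 0 ≤ u) (huv : u ≤ v) {N : ℕ} (hN : 1 ≤ N)
    {B : Finset ℕ} (hB : ∀ b ∈ B, u < b ∧ (b : ℝ) ≤ v ∧ ∀ p : ℕ, p.Prime → p ∣ b → N < p) :
    (B.card : ℝ) ≤ (v - u) / selbergSum N + (N : ℝ) ^ 4 := by
  set J := Finset.Ioc ⌊u⌋₊ ⌊v⌋₊ with hJ
  set lam := selbergWeight N with hlam
  have hBJ : B ⊆ J := fun b hb => by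
    obtain ⟨h1, h2, -⟩ := hB b hb
    exact Finset.mem_Ioc.mpr ⟨(Nat.floor_lt hu).mpr h1, Nat.le_floor h2⟩
  have hone : ∀ b ∈ B, ∑ d ∈ (Finset.Icc 1 N).filter (· ∣ b), lam d = 1 := by
    intro b hb
    have : (Finset.Icc 1 N).filter (· ∣ b) = {1} := by
      ext d
      simp only [Finset.mem_filter, Finset.mem_Icc, Finset.mem_singleton]
      constructor
      · rintro ⟨⟨h1, h2⟩, h3⟩
        by_contra hd
        have hlt := (hB b hb).2.2 _ (Nat.minFac_prime hd) ((Nat.minFac_dvd d).trans h3)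
        have := Nat.minFac_le (n := d) (by omega)
        omega
      · rintro rfl
        exact ⟨⟨le_rfl, hN⟩, one_dvd _⟩
    rw [this, Finset.sum_singleton, hlam, selbergWeight_one hN]
  have hsum : ∑ d ∈ Finset.Icc 1 N, |lam d| ≤ (N : ℝ) ^ 2 := by
    calc ∑ d ∈ Finset.Icc 1 N, |lam d| ≤ ∑ d ∈ Finset.Icc 1 N, (N : ℝ) := by
          refine Finset.sum_le_sum fun d hd => (abs_selbergWeight_le hN d).trans ?_
          exact_mod_cast (Finset.mem_Icc.mp hd).2
      _ = (N : ℝ) ^ 2 := by simp [sq]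
  calc (B.card : ℝ) = ∑ b ∈ B, (∑ d ∈ (Finset.Icc 1 N).filter (· ∣ b), lam d) ^ 2 := by
        rw [Finset.sum_congr rfl fun b hb => by rw [hone b hb]]
        simp
    _ ≤ ∑ b ∈ J, (∑ d ∈ (Finset.Icc 1 N).filter (· ∣ b), lam d) ^ 2 :=
        Finset.sum_le_sum_of_subset_of_nonneg hBJ fun _ _ _ => sq_nonneg _
    _ = ∑ d ∈ Finset.Icc 1 N, ∑ e ∈ Finset.Icc 1 N,
          lam d * lam e * ((J.filter (Nat.lcm d e ∣ ·)).card : ℝ) := by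
        calc ∑ b ∈ J, (∑ d ∈ (Finset.Icc 1 N).filter (· ∣ b), lam d) ^ 2
            = ∑ b ∈ J, ∑ d ∈ Finset.Icc 1 N, ∑ e ∈ Finset.Icc 1 N,
                if Nat.lcm d e ∣ b then lam d * lam e else 0 := by
              refine Finset.sum_congr rfl fun b _ => ?_
              rw [sq, Finset.sum_filter, Finset.sum_mul_sum]
              refine Finset.sum_congr rfl fun d _ => Finset.sum_congr rfl fun e _ => ?_
              by_cases h1 : d ∣ b <;> by_cases h2 : e ∣ b <;> simp [Nat.lcm_dvd_iff, h1, h2]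
          _ = _ := by
              rw [Finset.sum_comm]
              refine Finset.sum_congr rfl fun d _ => ?_
              rw [Finset.sum_comm]
              refine Finset.sum_congr rfl fun e _ => ?_
              rw [← Finset.sum_filter, Finset.sum_const, nsmul_eq_mul, mul_comm]
    _ ≤ ∑ d ∈ Finset.Icc 1 N, ∑ e ∈ Finset.Icc 1 N,
          ((v - u) * (lam d * lam e / (Nat.lcm d e : ℝ)) + |lam d| * |lam e|) := by
        refine Finset.sum_le_sum fun d hd => Finset.sum_le_sum fun e he => ?_
        have hpos : 0 < Nat.lcm d e := Nat.lcm_pos (Finset.mem_Icc.mp hd).1 (Finset.mem_Icc.mp he).1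
        have h := abs_card_Ioc_filter_dvd_sub_le hu huv hpos
        set c : ℝ := ((J.filter (Nat.lcm d e ∣ ·)).card : ℝ)
        have h' : lam d * lam e * (c - (v - u) / (Nat.lcm d e : ℝ)) ≤ |lam d| * |lam e| := by
          refine (le_abs_self _).trans ?_
          rw [abs_mul, abs_mul]
          exact mul_le_of_le_one_right (by positivity) h
        calc lam d * lam e * c = (v - u) * (lam d * lam e / (Nat.lcm d e : ℝ)) +
              lam d * lam e * (c - (v - u) / (Nat.lcm d e : ℝ)) := by ring
          _ ≤ _ := by gcongr
    _ = (v - u) / selbergSum N + (∑ d ∈ Finset.Icc 1 N, |lam d|) ^ 2 := by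
        simp_rw [Finset.sum_add_distrib, ← Finset.mul_sum]
        rw [hlam, sum_selbergWeight_mul_div_lcm hN, ← Finset.sum_mul, sq, div_eq_mul_inv]
    _ ≤ (v - u) / selbergSum N + (N : ℝ) ^ 4 := by
        have : (∑ d ∈ Finset.Icc 1 N, |lam d|) ^ 2 ≤ ((N : ℝ) ^ 2) ^ 2 :=
          pow_le_pow_left₀ (Finset.sum_nonneg fun _ _ => abs_nonneg _) hsum 2
        calc _ ≤ (v - u) / selbergSum N + ((N : ℝ) ^ 2) ^ 2 := by gcongr
          _ = _ := by ring

/-- Integers of an interval of length at least `D ^ 5` without prime factors up to `D`. -/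
theorem card_le_three_mul_div_log {u v D : ℝ} (hu : 0 ≤ u) (hD : 1 < D) (huv : D ^ 5 ≤ v - u)
    {B : Finset ℕ} (hB : ∀ b ∈ B, u < b ∧ (b : ℝ) ≤ v ∧ ∀ p : ℕ, p.Prime → p ∣ b → D < p) :
    (B.card : ℝ) ≤ 3 * (v - u) / Real.log D := by
  have hlog : 0 < Real.log D := Real.log_pos hD
  have hN : 1 ≤ ⌊D⌋₊ := (Nat.one_le_floor_iff D).mpr hD.le
  have hND : (⌊D⌋₊ : ℝ) ≤ D := Nat.floor_le (by linarith)
  have hH : 0 ≤ v - u := le_trans (by positivity) huv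
  have h := card_le_of_forall_prime_dvd_lt hu (by linarith) hN (B := B) fun b hb =>
    ⟨(hB b hb).1, (hB b hb).2.1, fun p hp hpb => by
      exact_mod_cast hND.trans_lt ((hB b hb).2.2 p hp hpb)⟩
  have hS := log_le_two_mul_selbergSum ⌊D⌋₊
  have hlogN : Real.log D ≤ Real.log (⌊D⌋₊ + 1) :=
    Real.log_le_log (by linarith) (Nat.lt_floor_add_one D).le
  have h1 : (v - u) / selbergSum ⌊D⌋₊ ≤ 2 * (v - u) / Real.log D := by
    rw [div_le_div_iff₀ (by linarith) hlog]
    nlinarith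
  have h2 : (⌊D⌋₊ : ℝ) ^ 4 ≤ (v - u) / Real.log D := by
    rw [le_div_iff₀ hlog]
    calc (⌊D⌋₊ : ℝ) ^ 4 * Real.log D ≤ D ^ 4 * D := by
          gcongr
          exact (Real.log_le_sub_one_of_pos (by linarith)).trans (by linarith)
      _ = D ^ 5 := by ring
      _ ≤ v - u := huv
  calc (B.card : ℝ) ≤ 2 * (v - u) / Real.log D + (v - u) / Real.log D := by linarith
    _ = 3 * (v - u) / Real.log D := by ring

end Sieve

section Rankin

variable {k : ℕ} {f : ℕ → ℝ}

theorem sum_filter_dvd_div_le (hf : ∀ n : ℕ, 1 ≤ n → 0 ≤ f n) {q : ℕ} (hq : 1 ≤ q) {c : ℝ}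
    (hsub : ∀ n : ℕ, 1 ≤ n → f (q * n) ≤ c * f n) (Z : ℕ) :
    ∑ a ∈ (Finset.Icc 1 Z).filter (q ∣ ·), f a / a ≤ c / q * ∑ a ∈ Finset.Icc 1 Z, f a / a := by
  have hq0 : (0 : ℝ) < q := by exact_mod_cast hq
  calc ∑ a ∈ (Finset.Icc 1 Z).filter (q ∣ ·), f a / a
      ≤ ∑ a ∈ (Finset.Icc 1 Z).image (q * ·), f a / a := by
        refine Finset.sum_le_sum_of_subset_of_nonneg ?_ fun a ha _ => ?_
        · intro a ha
          obtain ⟨haI, n, rfl⟩ := Finset.mem_filter.mp ha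
          obtain ⟨h1, h2⟩ := Finset.mem_Icc.mp haI
          have hn : 0 < n := Nat.pos_of_ne_zero (by rintro rfl; simp at h1)
          refine Finset.mem_image.mpr ⟨n, Finset.mem_Icc.mpr ⟨hn, ?_⟩, rfl⟩
          exact (Nat.le_mul_of_pos_left n hq).trans h2
        · obtain ⟨n, hn, rfl⟩ := Finset.mem_image.mp ha
          exact div_nonneg (hf _ (Nat.mul_pos hq (Finset.mem_Icc.mp hn).1)) (by positivity)
    _ = ∑ n ∈ Finset.Icc 1 Z, f (q * n) / ((q * n : ℕ) : ℝ) := by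
        rw [Finset.sum_image fun a _ b _ h => Nat.eq_of_mul_eq_mul_left hq h]
    _ ≤ c / q * ∑ a ∈ Finset.Icc 1 Z, f a / a := by
        rw [Finset.mul_sum]
        refine Finset.sum_le_sum fun n hn => ?_
        have hn0 : (0 : ℝ) < n := by exact_mod_cast (Finset.mem_Icc.mp hn).1
        push_cast
        rw [div_mul_div_comm]
        gcongr
        exact hsub n (Finset.mem_Icc.mp hn).1

theorem sum_div_mul_prod_pow_factorization_le (hf : ∀ n : ℕ, 1 ≤ n → 0 ≤ f n)
    (hsub : ∀ m n : ℕ, 1 ≤ m → 1 ≤ n → f (m * n) ≤ (piltz k m : ℝ) * f n)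
    {r E : ℕ → ℝ} (P : Finset ℕ) (hP : ∀ p ∈ P, p.Prime) (hr : ∀ p ∈ P, 1 ≤ r p)
    (hE : ∀ p ∈ P, ∀ J : ℕ, 1 + ∑ j ∈ Finset.range J, (r p ^ (j + 1) - r p ^ j) *
      ((piltz k (p ^ (j + 1)) : ℝ) / (p : ℝ) ^ (j + 1)) ≤ E p) (Z : ℕ) :
    ∑ a ∈ Finset.Icc 1 Z, f a * (∏ p ∈ P, r p ^ a.factorization p) / a ≤
      (∏ p ∈ P, E p) * ∑ a ∈ Finset.Icc 1 Z, f a / a := by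
  induction P using Finset.induction_on with
  | empty => simp
  | insert p P hpP ih =>
    have hp : p.Prime := hP p (Finset.mem_insert_self _ _)
    have hrp : 1 ≤ r p := hr p (Finset.mem_insert_self _ _)
    have hEp := hE p (Finset.mem_insert_self _ _)
    have hP' : ∀ q ∈ P, q.Prime := fun q hq => hP q (Finset.mem_insert_of_mem hq)
    have hr' : ∀ q ∈ P, 1 ≤ r q := fun q hq => hr q (Finset.mem_insert_of_mem hq)
    have ih' := ih hP' hr' fun q hq => hE q (Finset.mem_insert_of_mem hq)
    set g : ℕ → ℝ := fun a => f a * ∏ q ∈ P, r q ^ a.factorization q with hg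
    have hW : ∀ a : ℕ, 0 ≤ ∏ q ∈ P, r q ^ a.factorization q := fun a =>
      Finset.prod_nonneg fun q hq => pow_nonneg (zero_le_one.trans (hr' q hq)) _
    have hg0 : ∀ n : ℕ, 1 ≤ n → 0 ≤ g n := fun n hn => mul_nonneg (hf n hn) (hW n)
    have hgsub : ∀ j n : ℕ, 1 ≤ n → g (p ^ j * n) ≤ (piltz k (p ^ j) : ℝ) * g n := by
      intro j n hn
      have hprod : ∏ q ∈ P, r q ^ (p ^ j * n).factorization q =
          ∏ q ∈ P, r q ^ n.factorization q := by
        refine Finset.prod_congr rfl fun q hq => ?_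
        have hqp : p ≠ q := fun h => hpP (h ▸ hq)
        rw [Nat.factorization_mul (pow_ne_zero _ hp.ne_zero) (by omega), hp.factorization_pow]
        simp [Finsupp.single_eq_of_ne' hqp]
      simp only [hg, hprod, ← mul_assoc]
      exact mul_le_mul_of_nonneg_right (hsub _ _ (pow_pos hp.pos j) hn) (hW n)
    have hG : 0 ≤ ∑ a ∈ Finset.Icc 1 Z, g a / a := Finset.sum_nonneg fun a ha =>
      div_nonneg (hg0 a (Finset.mem_Icc.mp ha).1) (by positivity)
    have hpow : ∀ a ∈ Finset.Icc 1 Z, r p ^ a.factorization p =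
        1 + ∑ j ∈ Finset.range Z, if p ^ (j + 1) ∣ a then r p ^ (j + 1) - r p ^ j else 0 := by
      intro a ha
      obtain ⟨ha1, haZ⟩ := Finset.mem_Icc.mp ha
      have hlt : a.factorization p < a := Nat.factorization_lt p (by omega)
      rw [← Finset.sum_filter]
      have : (Finset.range Z).filter (fun j => p ^ (j + 1) ∣ a) =
          Finset.range (a.factorization p) := by
        ext j
        rw [Finset.mem_filter, Finset.mem_range, Finset.mem_range,
          hp.pow_dvd_iff_le_factorization (by omega)]
        omega
      rw [this, Finset.sum_range_sub (fun j => r p ^ j)]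
      simp
    calc ∑ a ∈ Finset.Icc 1 Z, f a * (∏ q ∈ insert p P, r q ^ a.factorization q) / a
        = ∑ a ∈ Finset.Icc 1 Z, (g a / a + ∑ j ∈ Finset.range Z,
            if p ^ (j + 1) ∣ a then (r p ^ (j + 1) - r p ^ j) * (g a / a) else 0) := by
          refine Finset.sum_congr rfl fun a ha => ?_
          rw [Finset.prod_insert hpP, hpow a ha]
          simp_rw [← ite_zero_mul]
          rw [← Finset.sum_mul]
          simp only [hg]
          ring
      _ = ∑ a ∈ Finset.Icc 1 Z, g a / a + ∑ j ∈ Finset.range Z, (r p ^ (j + 1) - r p ^ j) *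
            ∑ a ∈ (Finset.Icc 1 Z).filter (p ^ (j + 1) ∣ ·), g a / a := by
          rw [Finset.sum_add_distrib, Finset.sum_comm]
          congr 1
          refine Finset.sum_congr rfl fun j _ => ?_
          rw [← Finset.sum_filter, Finset.mul_sum]
      _ ≤ ∑ a ∈ Finset.Icc 1 Z, g a / a + ∑ j ∈ Finset.range Z, (r p ^ (j + 1) - r p ^ j) *
            ((piltz k (p ^ (j + 1)) : ℝ) / (p : ℝ) ^ (j + 1) *
              ∑ a ∈ Finset.Icc 1 Z, g a / a) := by
          gcongr with j _
          · exact sub_nonneg.mpr (pow_le_pow_right₀ hrp (Nat.le_succ j))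
          · have := sum_filter_dvd_div_le hg0 (q := p ^ (j + 1)) (pow_pos hp.pos _)
              (hgsub (j + 1)) Z
            push_cast at this
            exact this
      _ = (1 + ∑ j ∈ Finset.range Z, (r p ^ (j + 1) - r p ^ j) *
            ((piltz k (p ^ (j + 1)) : ℝ) / (p : ℝ) ^ (j + 1))) *
              ∑ a ∈ Finset.Icc 1 Z, g a / a := by
          rw [add_mul, one_mul, Finset.sum_mul]
          simp_rw [mul_assoc]
      _ ≤ E p * ((∏ q ∈ P, E q) * ∑ a ∈ Finset.Icc 1 Z, f a / a) := by
          refine mul_le_mul (hEp Z) ih' hG ?_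
          have h0 := hEp 0
          rw [Finset.sum_range_zero, add_zero] at h0
          linarith
      _ = _ := by rw [Finset.prod_insert hpP, mul_assoc]

theorem one_add_sum_piltz_le {p : ℕ} (hp : p.Prime) {δ : ℝ} (hδ0 : 0 ≤ δ) (hδ : δ ≤ 1 / 2)
    (k J : ℕ) :
    1 + ∑ j ∈ Finset.range J, (((p : ℝ) ^ δ) ^ (j + 1) - ((p : ℝ) ^ δ) ^ j) *
      ((piltz k (p ^ (j + 1)) : ℝ) / (p : ℝ) ^ (j + 1)) ≤
    1 + ((p : ℝ) ^ δ - 1) / p * (7 / 5 * (7 / 2) ^ k) := by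
  have hp2 : (2 : ℝ) ≤ p := by exact_mod_cast hp.two_le
  have hp0 : (0 : ℝ) < p := by linarith
  set r : ℝ := (p : ℝ) ^ δ with hrdef
  have hr1 : 1 ≤ r := Real.one_le_rpow (by linarith) hδ0
  have hrp : r / p ≤ 5 / 7 := by
    have h1 : r ≤ √p := by
      rw [Real.sqrt_eq_rpow]
      exact Real.rpow_le_rpow_of_exponent_le (by linarith) hδ
    have h2 : √(p : ℝ) ≤ 5 / 7 * p := by
      rw [Real.sqrt_le_left (by positivity)]
      nlinarith
    rw [div_le_iff₀ hp0]
    linarith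
  have hgen := sum_piltz_prime_pow_mul_pow_le hp (q := 5 / 7) (by norm_num) (by norm_num) k (J + 1)
  rw [Finset.sum_range_succ'] at hgen
  have hgen' : ∑ j ∈ Finset.range J, (piltz k (p ^ (j + 1)) : ℝ) * (5 / 7) ^ j ≤
      7 / 5 * (7 / 2) ^ k := by
    have : ∑ j ∈ Finset.range J, (piltz k (p ^ (j + 1)) : ℝ) * (5 / 7) ^ j =
        7 / 5 * ∑ j ∈ Finset.range J, (piltz k (p ^ (j + 1)) : ℝ) * (5 / 7) ^ (j + 1) := by
      rw [Finset.mul_sum]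
      refine Finset.sum_congr rfl fun j _ => ?_
      rw [pow_succ]; ring
    rw [this]
    refine mul_le_mul_of_nonneg_left ?_ (by norm_num)
    have hnn : (0 : ℝ) ≤ (piltz k (p ^ 0) : ℝ) * (5 / 7) ^ 0 := by positivity
    have h72 : ((1 : ℝ) - 5 / 7)⁻¹ = 7 / 2 := by norm_num
    rw [h72] at hgen
    linarith
  refine add_le_add le_rfl ?_
  have hcoef : 0 ≤ (r - 1) / p := div_nonneg (by linarith) hp0.le
  refine le_trans ?_ (mul_le_mul_of_nonneg_left hgen' hcoef)
  rw [Finset.mul_sum]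
  refine Finset.sum_le_sum fun j _ => ?_
  calc (r ^ (j + 1) - r ^ j) * ((piltz k (p ^ (j + 1)) : ℝ) / (p : ℝ) ^ (j + 1))
      = (r - 1) / p * ((piltz k (p ^ (j + 1)) : ℝ) * (r / p) ^ j) := by
        rw [div_pow]
        field_simp
        ring
    _ ≤ _ := by gcongr

/-- The Euler product constant in Rankin's method for functions dominated by `τ_k`. -/
noncomputable def rankinExponent (k : ℕ) (K : ℝ) : ℝ :=
  7 / 5 * (7 / 2) ^ k * ((K + 7 / 10) * Real.exp K)

theorem sum_rpow_sub_one_div_le {w K : ℝ} (hK : 1 / 2 ≤ K) (hw : 2 * K ≤ Real.log w) (hw0 : 1 ≤ w) :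
    ∑ p ∈ (Finset.Icc 1 ⌊w⌋₊).filter Nat.Prime, ((p : ℝ) ^ (K / Real.log w) - 1) / p ≤
      (K + 7 / 10) * Real.exp K := by
  have hlw : 0 < Real.log w := by linarith
  set δ := K / Real.log w with hδ
  have hδ0 : 0 ≤ δ := by positivity
  have hδw : δ * Real.log w = K := div_mul_cancel₀ _ hlw.ne'
  have hδ2 : δ ≤ 1 / 2 := by rw [hδ, div_le_iff₀ hlw]; linarith
  have hterm : ∀ p ∈ (Finset.Icc 1 ⌊w⌋₊).filter Nat.Prime,
      ((p : ℝ) ^ δ - 1) / p ≤ δ * Real.exp K * (Real.log p / p) := by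
    intro p hp
    obtain ⟨hpI, hpp⟩ := Finset.mem_filter.mp hp
    have hp0 : (0 : ℝ) < p := by exact_mod_cast hpp.pos
    have hpw : (p : ℝ) ≤ w := (Nat.le_floor_iff (by linarith)).mp (Finset.mem_Icc.mp hpI).2
    have hlp : 0 ≤ Real.log p := Real.log_natCast_nonneg p
    rw [Real.rpow_def_of_pos hp0]
    set t := Real.log p * δ with ht
    have ht0 : 0 ≤ t := by positivity
    have htK : t ≤ K := by
      rw [← hδw, ht, mul_comm]
      exact mul_le_mul_of_nonneg_left (Real.log_le_log hp0 hpw) hδ0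
    have h1 : Real.exp t - 1 ≤ t * Real.exp t := by
      have h2 := Real.add_one_le_exp (-t)
      have h3 : Real.exp (-t) * Real.exp t = 1 := by rw [← Real.exp_add]; simp
      nlinarith [mul_le_mul_of_nonneg_right h2 (Real.exp_pos t).le]
    have h4 : t * Real.exp t ≤ t * Real.exp K :=
      mul_le_mul_of_nonneg_left (Real.exp_le_exp.mpr htK) ht0
    calc (Real.exp t - 1) / p ≤ t * Real.exp K / p := by gcongr; linarith
      _ = δ * Real.exp K * (Real.log p / p) := by rw [ht]; ring
  refine (Finset.sum_le_sum hterm).trans ?_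
  rw [← Finset.mul_sum]
  have hlog4 : Real.log 4 ≤ 7 / 5 := by
    have : Real.log 4 = 2 * Real.log 2 := by
      rw [show (4 : ℝ) = 2 ^ 2 by norm_num, Real.log_pow]; norm_num
    rw [this]; linarith [Real.log_two_lt_d9]
  calc δ * Real.exp K * ∑ p ∈ (Finset.Icc 1 ⌊w⌋₊).filter Nat.Prime, Real.log p / p
      ≤ δ * Real.exp K * (Real.log w + Real.log 4) := by
        gcongr
        exact sum_log_prime_div_le hw0
    _ = (δ * Real.log w + δ * Real.log 4) * Real.exp K := by ring
    _ ≤ (K + 7 / 10) * Real.exp K := by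
        gcongr
        · exact hδw.le
        · nlinarith [Real.log_nonneg (show (1 : ℝ) ≤ 4 by norm_num)]

/-- Rankin's bound for the sum of `f a / a` over large `w`-smooth `a`. -/
theorem sum_smooth_div_le (hf : ∀ n : ℕ, 1 ≤ n → 0 ≤ f n)
    (hsub : ∀ m n : ℕ, 1 ≤ m → 1 ≤ n → f (m * n) ≤ (piltz k m : ℝ) * f n)
    {w K t : ℝ} (hK : 1 / 2 ≤ K) (hw : 2 * K ≤ Real.log w) (hw0 : 1 ≤ w) (ht : 0 < t)
    {Z : ℕ} {A : Finset ℕ} (hAZ : A ⊆ Finset.Icc 1 Z)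
    (hA : ∀ a ∈ A, t ≤ a ∧ ∀ p : ℕ, p.Prime → p ∣ a → (p : ℝ) ≤ w) :
    ∑ a ∈ A, f a / a ≤ t ^ (-(K / Real.log w)) * Real.exp (rankinExponent k K) *
      ∑ a ∈ Finset.Icc 1 Z, f a / a := by
  have hlw : 0 < Real.log w := by linarith
  set δ := K / Real.log w with hδ
  have hδ0 : 0 ≤ δ := by positivity
  have hδ2 : δ ≤ 1 / 2 := by rw [hδ, div_le_iff₀ hlw]; linarith
  set P := (Finset.Icc 1 ⌊w⌋₊).filter Nat.Prime with hPdef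
  have hP : ∀ p ∈ P, p.Prime := fun p hp => (Finset.mem_filter.mp hp).2
  have hF : 0 ≤ ∑ a ∈ Finset.Icc 1 Z, f a / a := Finset.sum_nonneg fun a ha =>
    div_nonneg (hf a (Finset.mem_Icc.mp ha).1) (by positivity)
  have hr1 : ∀ p ∈ P, 1 ≤ (p : ℝ) ^ δ := fun p hp =>
    Real.one_le_rpow (by exact_mod_cast (hP p hp).one_le) hδ0
  have hmain := sum_div_mul_prod_pow_factorization_le hf hsub
    (r := fun p => (p : ℝ) ^ δ)
    (E := fun p => 1 + ((p : ℝ) ^ δ - 1) / p * (7 / 5 * (7 / 2) ^ k)) P hP hr1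
    (fun p hp J => one_add_sum_piltz_le (hP p hp) hδ0 hδ2 k J) Z
  have hprod : ∏ p ∈ P, (1 + ((p : ℝ) ^ δ - 1) / p * (7 / 5 * (7 / 2) ^ k)) ≤
      Real.exp (rankinExponent k K) := by
    calc ∏ p ∈ P, (1 + ((p : ℝ) ^ δ - 1) / p * (7 / 5 * (7 / 2) ^ k))
        ≤ ∏ p ∈ P, Real.exp (((p : ℝ) ^ δ - 1) / p * (7 / 5 * (7 / 2) ^ k)) := by
          refine Finset.prod_le_prod (fun p hp => ?_) fun p _ => ?_
          · have := sub_nonneg.mpr (hr1 p hp)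
            positivity
          · rw [add_comm]; exact Real.add_one_le_exp _
      _ = Real.exp (7 / 5 * (7 / 2) ^ k * ∑ p ∈ P, ((p : ℝ) ^ δ - 1) / p) := by
          rw [← Real.exp_sum, ← Finset.sum_mul, mul_comm]
      _ ≤ Real.exp (rankinExponent k K) := by
          refine Real.exp_le_exp.mpr (mul_le_mul_of_nonneg_left ?_ (by positivity))
          exact sum_rpow_sub_one_div_le hK hw hw0
  calc ∑ a ∈ A, f a / a
      ≤ ∑ a ∈ A, t ^ (-δ) *
          (f a * (∏ p ∈ P, ((p : ℝ) ^ δ) ^ a.factorization p) / a) := by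
        refine Finset.sum_le_sum fun a ha => ?_
        have ha1 : 1 ≤ a := (Finset.mem_Icc.mp (hAZ ha)).1
        have ha0 : (0 : ℝ) < a := by exact_mod_cast ha1
        obtain ⟨hta, hsm⟩ := hA a ha
        have hpa : ∏ p ∈ P, ((p : ℝ) ^ δ) ^ a.factorization p = (a : ℝ) ^ δ := by
          calc ∏ p ∈ P, ((p : ℝ) ^ δ) ^ a.factorization p
              = ∏ p ∈ a.primeFactors, ((p : ℝ) ^ δ) ^ a.factorization p := by
                refine (Finset.prod_subset (fun p hp => ?_) fun p _ hp => ?_).symm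
                · have hpp := Nat.prime_of_mem_primeFactors hp
                  refine Finset.mem_filter.mpr ⟨Finset.mem_Icc.mpr ⟨hpp.one_le, ?_⟩, hpp⟩
                  exact Nat.le_floor (hsm p hpp (Nat.dvd_of_mem_primeFactors hp))
                · rw [Finsupp.notMem_support_iff.mp hp, pow_zero]
            _ = ∏ p ∈ a.primeFactors, ((p : ℝ) ^ a.factorization p) ^ δ := by
                refine Finset.prod_congr rfl fun p _ => ?_
                rw [← Real.rpow_mul_natCast (by positivity),
                  ← Real.rpow_natCast_mul (by positivity), mul_comm]
            _ = (a : ℝ) ^ δ := by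
                rw [Real.finsetProd_rpow _ _ (fun _ _ => by positivity)]
                congr 1
                conv_rhs => rw [← Nat.prod_factorization_pow_eq_self (by omega : a ≠ 0),
                  Finsupp.prod]
                push_cast
                rfl
        have hge : 1 ≤ t ^ (-δ) * (a : ℝ) ^ δ := by
          rw [Real.rpow_neg ht.le, inv_mul_eq_div, le_div_iff₀ (by positivity), one_mul]
          exact Real.rpow_le_rpow ht.le hta hδ0
        rw [hpa]
        calc f a / a ≤ (t ^ (-δ) * (a : ℝ) ^ δ) * (f a / a) :=
              le_mul_of_one_le_left (div_nonneg (hf a ha1) ha0.le) hge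
          _ = _ := by ring
    _ = t ^ (-δ) * ∑ a ∈ A, f a * (∏ p ∈ P, ((p : ℝ) ^ δ) ^ a.factorization p) / a := by
        rw [Finset.mul_sum]
    _ ≤ t ^ (-δ) * ∑ a ∈ Finset.Icc 1 Z,
          f a * (∏ p ∈ P, ((p : ℝ) ^ δ) ^ a.factorization p) / a := by
        refine mul_le_mul_of_nonneg_left ?_ (by positivity)
        refine Finset.sum_le_sum_of_subset_of_nonneg hAZ fun a ha _ => ?_
        have := hf a (Finset.mem_Icc.mp ha).1
        have h2 : 0 ≤ ∏ p ∈ P, ((p : ℝ) ^ δ) ^ a.factorization p :=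
          Finset.prod_nonneg fun _ _ => by positivity
        positivity
    _ ≤ t ^ (-δ) * (Real.exp (rankinExponent k K) * ∑ a ∈ Finset.Icc 1 Z, f a / a) := by
        refine mul_le_mul_of_nonneg_left (hmain.trans ?_) (by positivity)
        exact mul_le_mul_of_nonneg_right hprod hF
    _ = _ := by ring

end Rankin

section Decomposition

theorem exists_smooth_mul_rough {n : ℕ} {z : ℝ} (hz : 1 ≤ z) (hn : z < n) :
    ∃ a b : ℕ, a * b = n ∧ 1 ≤ a ∧ (a : ℝ) ≤ z ∧ b ≠ 1 ∧ z < a * b.minFac ∧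
      ∀ p : ℕ, p.Prime → p ∣ a → p ≤ b.minFac := by
  have hn0 : n ≠ 0 := by
    rintro rfl
    norm_num at hn
    linarith
  classical
  set S := n.divisors.filter fun a : ℕ => (a : ℝ) ≤ z ∧
    ∀ p : ℕ, p.Prime → p ∣ a → ∀ q : ℕ, q.Prime → q ∣ n / a → p ≤ q with hS
  have hne : S.Nonempty := by
    refine ⟨1, Finset.mem_filter.mpr ⟨Nat.one_mem_divisors.mpr hn0, by simpa using hz, ?_⟩⟩
    intro p hp h1
    exact absurd (Nat.dvd_one.mp h1) hp.ne_one
  obtain ⟨a, haS, hmax⟩ := S.exists_max_image id hne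
  obtain ⟨hadiv, haz, hap⟩ := Finset.mem_filter.mp haS
  obtain ⟨b, rfl⟩ := Nat.dvd_of_mem_divisors hadiv
  have ha0 : 0 < a := Nat.pos_of_ne_zero (left_ne_zero_of_mul hn0)
  have hb0 : b ≠ 0 := right_ne_zero_of_mul hn0
  rw [Nat.mul_div_cancel_left b ha0] at hap
  have hb1 : b ≠ 1 := by
    rintro rfl
    rw [mul_one] at hn
    linarith
  have hbp := Nat.minFac_prime hb1
  refine ⟨a, b, rfl, ha0, haz, hb1, ?_, fun p hp hpa => hap p hp hpa _ hbp (Nat.minFac_dvd b)⟩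
  by_contra hle
  push Not at hle
  obtain ⟨c, hc⟩ := Nat.minFac_dvd b
  have hmem : a * b.minFac ∈ S := by
    refine Finset.mem_filter.mpr ⟨Nat.mem_divisors.mpr
      ⟨Nat.mul_dvd_mul_left a (Nat.minFac_dvd b), hn0⟩, by exact_mod_cast hle, ?_⟩
    intro p hp hpab q hq hqd
    have hqb : q ∣ b := by
      have h1 : a * b / (a * b.minFac) = b / b.minFac := Nat.mul_div_mul_left _ _ ha0
      rw [h1] at hqd
      exact hqd.trans (Nat.div_dvd_of_dvd (Nat.minFac_dvd b))
    rcases hp.dvd_mul.mp hpab with h | h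
    · exact hap p hp h q hq hqb
    · rw [(Nat.prime_dvd_prime_iff_eq hp hbp).mp h]
      exact Nat.minFac_le_of_dvd hq.two_le hqb
  have h1 := hmax _ hmem
  simp only [id] at h1
  nlinarith [hbp.two_le]

theorem minFac_pow_cardFactors_le {b : ℕ} (hb : b ≠ 0) :
    b.minFac ^ ArithmeticFunction.cardFactors b ≤ b := by
  rw [ArithmeticFunction.cardFactors_apply]
  conv_rhs => rw [← Nat.prod_primeFactorsList hb]
  refine List.pow_card_le_prod _ _ fun p hp => ?_
  exact Nat.minFac_le_of_dvd (Nat.prime_of_mem_primeFactorsList hp).two_le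
    (Nat.dvd_of_mem_primeFactorsList hp)

theorem piltz_le_rpow_of_minFac {k b : ℕ} (hk : 0 < k) (hb : b ≠ 0) {c L : ℝ} (hc : 0 < c)
    (hcb : c ≤ Real.log b.minFac) (hbL : Real.log b ≤ L) :
    (piltz k b : ℝ) ≤ (k : ℝ) ^ (L / c) := by
  have hk' : (1 : ℝ) ≤ k := by exact_mod_cast hk
  have h1 : (piltz k b : ℝ) ≤ (k : ℝ) ^ ((ArithmeticFunction.cardFactors b : ℕ) : ℝ) := by
    rw [Real.rpow_natCast]
    exact_mod_cast piltz_le_pow_cardFactors k hb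
  refine h1.trans (Real.rpow_le_rpow_of_exponent_le hk' ?_)
  have h2 : ((b.minFac : ℝ)) ^ ArithmeticFunction.cardFactors b ≤ b := by
    exact_mod_cast minFac_pow_cardFactors_le hb
  have h3 := Real.log_le_log (pow_pos (by exact_mod_cast b.minFac_pos) _) h2
  rw [Real.log_pow] at h3
  rw [le_div_iff₀ hc]
  calc (ArithmeticFunction.cardFactors b : ℝ) * c
      ≤ ArithmeticFunction.cardFactors b * Real.log b.minFac := by gcongr
    _ ≤ L := h3.trans hbL

/-- Summation of `f (a b) ≤ τ_k(b) f(a)` over the fibres of `a`. -/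
theorem sum_le_of_card_fiber_le {k : ℕ} {f : ℕ → ℝ} (hf : ∀ n : ℕ, 1 ≤ n → 0 ≤ f n)
    (hsub : ∀ m n : ℕ, 1 ≤ m → 1 ≤ n → f (m * n) ≤ (piltz k m : ℝ) * f n)
    {x y T V : ℝ} (hT : 0 ≤ T) {N A : Finset ℕ} {α β : ℕ → ℕ} {Q : ℕ → Prop}
    (hA : ∀ a ∈ A, 1 ≤ a)
    (hN : ∀ n ∈ N, α n * β n = n ∧ α n ∈ A ∧ 1 ≤ β n ∧ x - y < n ∧ (n : ℝ) ≤ x ∧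
      (piltz k (β n) : ℝ) ≤ T ∧ Q (β n))
    (hcard : ∀ a ∈ A, ∀ B : Finset ℕ,
      (∀ b ∈ B, (x - y) / a < b ∧ (b : ℝ) ≤ x / a ∧ Q b) → (B.card : ℝ) ≤ V * (y / a)) :
    ∑ n ∈ N, f n ≤ T * V * y * ∑ a ∈ A, f a / a := by
  rw [← Finset.sum_fiberwise_of_maps_to (fun n hn => (hN n hn).2.1), Finset.mul_sum]
  refine Finset.sum_le_sum fun a ha => ?_
  have ha0 : (0 : ℝ) < a := by exact_mod_cast hA a ha
  have hfa : 0 ≤ f a := hf a (hA a ha)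
  set M := N.filter (fun n => α n = a) with hM
  have hMn : ∀ n ∈ M, a * β n = n ∧ n ∈ N := fun n hn => by
    obtain ⟨h1, h2⟩ := Finset.mem_filter.mp hn
    exact ⟨by rw [← h2]; exact (hN n h1).1, h1⟩
  have hinj : Set.InjOn β (M : Set ℕ) := fun n hn m hm h => by
    rw [← (hMn n hn).1, ← (hMn m hm).1, h]
  have hc : (M.card : ℝ) ≤ V * (y / a) := by
    rw [← Finset.card_image_of_injOn hinj]
    refine hcard a ha _ fun b hb => ?_
    obtain ⟨n, hn, rfl⟩ := Finset.mem_image.mp hb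
    obtain ⟨h1, h2⟩ := hMn n hn
    obtain ⟨-, -, -, h3, h4, -, h5⟩ := hN n h2
    have hcast : (n : ℝ) = β n * a := by rw [mul_comm]; exact_mod_cast h1.symm
    exact ⟨by rwa [div_lt_iff₀ ha0, ← hcast], by rwa [le_div_iff₀ ha0, ← hcast], h5⟩
  calc ∑ n ∈ M, f n ≤ ∑ n ∈ M, T * f a := by
        refine Finset.sum_le_sum fun n hn => ?_
        obtain ⟨h1, h2⟩ := hMn n hn
        obtain ⟨-, -, h3, -, -, h4, -⟩ := hN n h2
        calc f n = f (β n * a) := by rw [mul_comm, h1]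
          _ ≤ (piltz k (β n) : ℝ) * f a := hsub _ _ h3 (hA a ha)
          _ ≤ T * f a := by gcongr
    _ = M.card * (T * f a) := by rw [Finset.sum_const, nsmul_eq_mul]
    _ ≤ V * (y / a) * (T * f a) := by gcongr
    _ = T * V * y * (f a / a) := by ring

theorem card_le_two_mul_of_mem_Ioc {u v : ℝ} (hu : 0 ≤ u) (huv : 1 ≤ v - u) {B : Finset ℕ}
    (hB : ∀ b ∈ B, u < b ∧ (b : ℝ) ≤ v) : (B.card : ℝ) ≤ 2 * (v - u) := by
  have hsub : B ⊆ Finset.Ioc ⌊u⌋₊ ⌊v⌋₊ := fun b hb =>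
    Finset.mem_Ioc.mpr ⟨(Nat.floor_lt hu).mpr (hB b hb).1, Nat.le_floor (hB b hb).2⟩
  have h1 := Finset.card_le_card hsub
  rw [Nat.card_Ioc] at h1
  have h2 : (B.card : ℝ) ≤ (⌊v⌋₊ : ℝ) - ⌊u⌋₊ := by
    rw [← Nat.cast_sub (Nat.floor_le_floor (by linarith))]
    exact_mod_cast h1
  have h3 := Nat.floor_le (show 0 ≤ v by linarith)
  have h4 := Nat.lt_floor_add_one u
  linarith

end Decomposition

section ShortSums

variable {k : ℕ} {f : ℕ → ℝ}

theorem sum_le_of_lt_log_minFac (hk : 0 < k) (hf : ∀ n : ℕ, 1 ≤ n → 0 ≤ f n)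
    (hsub : ∀ m n : ℕ, 1 ≤ m → 1 ≤ n → f (m * n) ≤ (piltz k m : ℝ) * f n)
    {x R ℓ σ : ℝ} (hR : 0 < R) (hσ : 1 ≤ σ) (hyx : Real.exp (2 * R) ≤ x)
    (hx : Real.log x ≤ 2 * ℓ * R) {N A : Finset ℕ} {α β : ℕ → ℕ}
    (hA : ∀ a ∈ A, 1 ≤ a ∧ (a : ℝ) ≤ Real.exp R)
    (hN : ∀ n ∈ N, α n * β n = n ∧ α n ∈ A ∧ x - Real.exp (2 * R) < n ∧ (n : ℝ) ≤ x ∧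
      R / σ < Real.log (β n).minFac) :
    ∑ n ∈ N, f n ≤ 30 * ℓ * σ * (k : ℝ) ^ (2 * ℓ * σ) * (Real.exp (2 * R) / Real.log x) *
      ∑ a ∈ A, f a / a := by
  have hk' : (1 : ℝ) ≤ k := by exact_mod_cast hk
  have hσ0 : 0 < σ := by linarith
  have hx0 : 0 < x := (Real.exp_pos _).trans_le hyx
  have hL : 2 * R ≤ Real.log x := (Real.le_log_iff_exp_le hx0).mpr hyx
  have hL0 : 0 < Real.log x := by linarith
  have hc : 0 < R / σ := by positivity
  have hsum : 0 ≤ ∑ a ∈ A, f a / a :=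
    Finset.sum_nonneg fun a ha => div_nonneg (hf a (hA a ha).1) (Nat.cast_nonneg a)
  have key := sum_le_of_card_fiber_le hf hsub (x := x) (y := Real.exp (2 * R))
    (T := (k : ℝ) ^ (2 * ℓ * σ)) (V := 30 * ℓ * σ / Real.log x) (N := N) (A := A) (α := α) (β := β)
    (Q := fun b => ∀ p : ℕ, p.Prime → p ∣ b → Real.exp (R / σ / 5) < p)
    (by positivity) (fun a ha => (hA a ha).1) ?_ ?_
  · refine key.trans (le_of_eq ?_)
    ring
  · intro n hn
    obtain ⟨h1, h2, h3, h4, h5⟩ := hN n hn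
    have hn0 : n ≠ 0 := by
      rintro rfl
      push_cast at h3
      linarith
    have hb0 : β n ≠ 0 := by
      intro h
      rw [h, mul_zero] at h1
      exact hn0 h1.symm
    refine ⟨h1, h2, Nat.pos_of_ne_zero hb0, h3, h4, ?_, ?_⟩
    · have hbn : β n ≤ n := by
        conv_rhs => rw [← h1]
        exact Nat.le_mul_of_pos_left _ (hA _ h2).1
      have hlog : Real.log (β n) ≤ Real.log x :=
        Real.log_le_log (by exact_mod_cast Nat.pos_of_ne_zero hb0)
          ((Nat.cast_le.mpr hbn).trans h4)
      refine (piltz_le_rpow_of_minFac hk hb0 hc h5.le hlog).trans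
        (Real.rpow_le_rpow_of_exponent_le hk' ?_)
      rw [div_le_iff₀ hc]
      calc Real.log x ≤ 2 * ℓ * R := hx
        _ = 2 * ℓ * σ * (R / σ) := by field_simp
    · intro p hp hpb
      have hm : ((β n).minFac : ℝ) ≤ p := by exact_mod_cast Nat.minFac_le_of_dvd hp.two_le hpb
      refine lt_of_lt_of_le ?_ hm
      rw [← Real.lt_log_iff_exp_lt (by exact_mod_cast (β n).minFac_pos)]
      linarith
  · intro a ha B hB
    obtain ⟨ha1, haR⟩ := hA a ha
    have ha0 : (0 : ℝ) < a := by exact_mod_cast ha1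
    have hsubdiv : x / a - (x - Real.exp (2 * R)) / a = Real.exp (2 * R) / a := by ring
    have hD : Real.exp (R / σ / 5) ^ 5 ≤ x / a - (x - Real.exp (2 * R)) / a := by
      rw [hsubdiv, le_div_iff₀ ha0, ← Real.exp_nat_mul]
      calc Real.exp ((5 : ℕ) * (R / σ / 5)) * a ≤ Real.exp R * Real.exp R := by
            gcongr
            push_cast
            rw [mul_div_cancel₀ _ (by norm_num)]
            exact div_le_self hR.le hσ
        _ = Real.exp (2 * R) := by rw [← Real.exp_add]; ring_nf
    have h1 := card_le_three_mul_div_log (div_nonneg (sub_nonneg.mpr hyx) ha0.le)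
      (Real.one_lt_exp_iff.mpr (by positivity)) hD hB
    rw [hsubdiv, Real.log_exp] at h1
    refine h1.trans ?_
    calc 3 * (Real.exp (2 * R) / a) / (R / σ / 5) = 15 * σ / R * (Real.exp (2 * R) / a) := by
          field_simp; ring
      _ ≤ 30 * ℓ * σ / Real.log x * (Real.exp (2 * R) / a) := by
          gcongr ?_ * _
          rw [div_le_div_iff₀ hR hL0]
          nlinarith

theorem sum_add_one_mul_geometric_le (S : Finset ℕ) :
    ∑ s ∈ S, ((s : ℝ) + 1) * (4 / 5) ^ s ≤ 25 := by
  have hr : ‖(4 / 5 : ℝ)‖ < 1 := by rw [Real.norm_of_nonneg] <;> norm_num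
  have h := (hasSum_coe_mul_geometric_of_norm_lt_one hr).add (hasSum_geometric_of_norm_lt_one hr)
  calc ∑ s ∈ S, ((s : ℝ) + 1) * (4 / 5) ^ s
      = ∑ s ∈ S, ((s : ℝ) * (4 / 5) ^ s + (4 / 5) ^ s) :=
        Finset.sum_congr rfl fun s _ => by ring
    _ ≤ _ := sum_le_hasSum S (fun s _ => by positivity) h
    _ = 25 := by norm_num

/-- Integers `n = a b` in a short interval whose rough part `b` has its least prime factor between
`exp (2 K)` and `exp (R / 2)`, split according to `⌊R / log p⌋`. -/
theorem sum_le_of_two_mul_lt_log_minFac (hk : 0 < k) (hf : ∀ n : ℕ, 1 ≤ n → 0 ≤ f n)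
    (hsub : ∀ m n : ℕ, 1 ≤ m → 1 ≤ n → f (m * n) ≤ (piltz k m : ℝ) * f n)
    {x R ℓ : ℝ} (hℓ : 0 ≤ ℓ) (hR : 0 < R) (hyx : Real.exp (2 * R) ≤ x)
    (hx : Real.log x ≤ 2 * ℓ * R) {N : Finset ℕ} {α β : ℕ → ℕ}
    (hN : ∀ n ∈ N, α n * β n = n ∧ x - Real.exp (2 * R) < n ∧ (n : ℝ) ≤ x ∧
      1 ≤ α n ∧ (α n : ℝ) ≤ Real.exp R ∧ Real.exp (R / 2) ≤ α n ∧
      (∀ p : ℕ, p.Prime → p ∣ α n → p ≤ (β n).minFac) ∧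
      2 * (4 * ℓ * Real.log k + 1 / 2) < Real.log (β n).minFac ∧
      Real.log (β n).minFac ≤ R / 2) :
    ∑ n ∈ N, f n ≤ 750 * ℓ * (k : ℝ) ^ (2 * ℓ) *
      Real.exp (rankinExponent k (4 * ℓ * Real.log k + 1 / 2)) *
      (Real.exp (2 * R) / Real.log x) * ∑ a ∈ Finset.Icc 1 ⌊Real.exp R⌋₊, f a / a := by
  classical
  set K : ℝ := 4 * ℓ * Real.log k + 1 / 2 with hKdef
  set F := ∑ a ∈ Finset.Icc 1 ⌊Real.exp R⌋₊, f a / a with hF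
  have hk0 : (0 : ℝ) < k := by exact_mod_cast hk
  have hlogk : 0 ≤ Real.log k := Real.log_nonneg (by exact_mod_cast hk)
  have hK : 1 / 2 ≤ K := by
    have : 0 ≤ 4 * ℓ * Real.log k := by positivity
    linarith
  have hL0 : 0 < Real.log x := by
    have := (Real.le_log_iff_exp_le ((Real.exp_pos _).trans_le hyx)).mpr hyx
    linarith
  have hF0 : 0 ≤ F :=
    Finset.sum_nonneg fun a ha => div_nonneg (hf a (Finset.mem_Icc.mp ha).1) (Nat.cast_nonneg a)
  set σ : ℕ → ℕ := fun n => ⌊R / Real.log (β n).minFac⌋₊ with hσ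
  set M : ℝ := 30 * ℓ * (k : ℝ) ^ (2 * ℓ) * Real.exp (rankinExponent k K) *
    (Real.exp (2 * R) / Real.log x) * F with hM
  have hM0 : 0 ≤ M := by positivity
  have hclass : ∀ s ∈ N.image σ, ∑ n ∈ N.filter (fun n => σ n = s), f n ≤
      ((s : ℝ) + 1) * (4 / 5) ^ s * M := by
    intro s hs
    have hprop : ∀ n ∈ N, σ n = s → (2 : ℝ) ≤ s ∧ Real.log (β n).minFac ≤ R / s ∧
        R / (s + 1) < Real.log (β n).minFac := by
      rintro n hn rfl
      obtain ⟨-, -, -, -, -, -, -, hlow, hupp⟩ := hN n hn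
      have hp0 : 0 < Real.log (β n).minFac := by linarith
      have h2 : (2 : ℝ) ≤ R / Real.log (β n).minFac := by
        rw [le_div_iff₀ hp0]; linarith
      have h2' : (2 : ℝ) ≤ σ n := by
        exact_mod_cast Nat.le_floor (show ((2 : ℕ) : ℝ) ≤ _ by exact_mod_cast h2)
      refine ⟨h2', ?_, ?_⟩
      · rw [le_div_iff₀ (by linarith), mul_comm, ← le_div_iff₀ hp0]
        exact Nat.floor_le (by linarith)
      · rw [div_lt_iff₀ (by linarith), mul_comm, ← div_lt_iff₀ hp0]
        exact Nat.lt_floor_add_one _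
    obtain ⟨n₀, hn₀, hn₀s⟩ := Finset.mem_image.mp hs
    obtain ⟨hs2, hs3, -⟩ := hprop n₀ hn₀ hn₀s
    have hs0 : (0 : ℝ) < s := by linarith
    have hKs : 2 * K ≤ Real.log (Real.exp (R / s)) := by
      rw [Real.log_exp]
      exact (hN n₀ hn₀).2.2.2.2.2.2.2.1.le.trans hs3
    set A := (Finset.Icc 1 ⌊Real.exp R⌋₊).filter fun a : ℕ =>
      Real.exp (R / 2) ≤ a ∧ ∀ p : ℕ, p.Prime → p ∣ a → (p : ℝ) ≤ Real.exp (R / s) with hA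
    have h1 := sum_le_of_lt_log_minFac hk hf hsub (x := x) (R := R) (ℓ := ℓ) (σ := (s : ℝ) + 1) hR
      (by linarith) hyx hx (N := N.filter fun n => σ n = s) (A := A) (α := α) (β := β)
      (fun a ha => by
        obtain ⟨h3, h4⟩ := Finset.mem_Icc.mp (Finset.mem_filter.mp ha).1
        exact ⟨h3, (Nat.le_floor_iff (Real.exp_pos R).le).mp h4⟩)
      (fun n hn => by
        obtain ⟨hnN, hns⟩ := Finset.mem_filter.mp hn
        obtain ⟨e1, e2, e3, e4, e5, e6, e7, -, -⟩ := hN n hnN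
        obtain ⟨-, e8, e9⟩ := hprop n hnN hns
        refine ⟨e1, Finset.mem_filter.mpr ⟨Finset.mem_Icc.mpr ⟨e4, Nat.le_floor e5⟩, e6, ?_⟩,
          e2, e3, e9⟩
        intro p hp hpa
        refine (Nat.cast_le.mpr (e7 p hp hpa)).trans ?_
        rwa [← Real.log_le_iff_le_exp (by exact_mod_cast (β n).minFac_pos)])
    have h2 := sum_smooth_div_le hf hsub (w := Real.exp (R / s)) (K := K) (t := Real.exp (R / 2))
      hK hKs (Real.one_le_exp (by positivity)) (Real.exp_pos _) (Z := ⌊Real.exp R⌋₊) (A := A)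
      (Finset.filter_subset _ _) (fun a ha => (Finset.mem_filter.mp ha).2)
    have h3 : Real.exp (R / 2) ^ (-(K / Real.log (Real.exp (R / s)))) ≤
        (k : ℝ) ^ (-(2 * ℓ * s)) * (4 / 5) ^ s := by
      rw [Real.log_exp, ← Real.exp_mul, Real.rpow_def_of_pos hk0]
      have e1 : R / 2 * -(K / (R / s)) = Real.log k * -(2 * ℓ * s) + s * (-(1 / 4)) := by
        rw [hKdef]
        field_simp
        ring
      rw [e1, Real.exp_add, Real.exp_nat_mul]
      gcongr
      rw [Real.exp_neg, inv_le_comm₀ (Real.exp_pos _) (by norm_num)]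
      have := Real.add_one_le_exp (1 / 4 : ℝ)
      linarith
    calc ∑ n ∈ N.filter (fun n => σ n = s), f n
        ≤ 30 * ℓ * ((s : ℝ) + 1) * (k : ℝ) ^ (2 * ℓ * ((s : ℝ) + 1)) *
          (Real.exp (2 * R) / Real.log x) * ∑ a ∈ A, f a / a := h1
      _ ≤ 30 * ℓ * ((s : ℝ) + 1) * (k : ℝ) ^ (2 * ℓ * ((s : ℝ) + 1)) *
          (Real.exp (2 * R) / Real.log x) *
          ((k : ℝ) ^ (-(2 * ℓ * s)) * (4 / 5) ^ s * Real.exp (rankinExponent k K) * F) := by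
          gcongr
          refine h2.trans ?_
          gcongr
      _ = ((s : ℝ) + 1) * (4 / 5) ^ s * M := by
          have e2 : (k : ℝ) ^ (2 * ℓ * ((s : ℝ) + 1)) * (k : ℝ) ^ (-(2 * ℓ * s)) =
              (k : ℝ) ^ (2 * ℓ) := by
            rw [← Real.rpow_add hk0]
            ring_nf
          rw [hM, ← e2]
          ring
  rw [← Finset.sum_fiberwise_of_maps_to (fun n hn => Finset.mem_image_of_mem σ hn)]
  calc ∑ s ∈ N.image σ, ∑ n ∈ N.filter (fun n => σ n = s), f n
      ≤ ∑ s ∈ N.image σ, ((s : ℝ) + 1) * (4 / 5) ^ s * M := Finset.sum_le_sum hclass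
    _ ≤ 25 * M := by
        rw [← Finset.sum_mul]
        gcongr
        exact sum_add_one_mul_geometric_le _
    _ = _ := by rw [hM]; ring

/-- Integers `n = a b` in a short interval whose rough part `b` has its least prime factor at most
`exp (2 K)`. -/
theorem sum_le_of_log_minFac_le (hk : 0 < k) (hf : ∀ n : ℕ, 1 ≤ n → 0 ≤ f n)
    (hsub : ∀ m n : ℕ, 1 ≤ m → 1 ≤ n → f (m * n) ≤ (piltz k m : ℝ) * f n)
    {x R ℓ K : ℝ} (hℓ : 1 ≤ ℓ) (hK : 1 / 2 ≤ K) (hR : 0 < R) (hyx : Real.exp (2 * R) ≤ x)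
    (hx : Real.log x ≤ 2 * ℓ * R)
    (hloglog : Real.log (Real.log x) ≤ Real.log x / (40 * ℓ)) {N : Finset ℕ} {α β : ℕ → ℕ}
    (hN : ∀ n ∈ N, α n * β n = n ∧ x - Real.exp (2 * R) < n ∧ (n : ℝ) ≤ x ∧
      1 ≤ α n ∧ (α n : ℝ) ≤ Real.exp R ∧ Real.exp (R / 2) ≤ α n ∧
      (∀ p : ℕ, p.Prime → p ∣ α n → p ≤ (β n).minFac) ∧
      Real.log (β n).minFac ≤ 2 * K) :
    ∑ n ∈ N, f n ≤ 2 * (15 * ℓ * k) ^ (k * (k : ℝ) ^ (10 * ℓ)) *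
      Real.exp (rankinExponent k K) *
      (Real.exp (2 * R) / Real.log x) * ∑ a ∈ Finset.Icc 1 ⌊Real.exp R⌋₊, f a / a := by
  classical
  set F := ∑ a ∈ Finset.Icc 1 ⌊Real.exp R⌋₊, f a / a with hF
  set C : ℝ := (15 * ℓ * k) ^ (k * (k : ℝ) ^ (10 * ℓ)) with hC
  have hk0 : (0 : ℝ) < k := by exact_mod_cast hk
  have hx0 : 0 < x := (Real.exp_pos _).trans_le hyx
  have hL0 : 0 < Real.log x := by
    have := (Real.le_log_iff_exp_le hx0).mpr hyx
    linarith
  have hF0 : 0 ≤ F :=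
    Finset.sum_nonneg fun a ha => div_nonneg (hf a (Finset.mem_Icc.mp ha).1) (Nat.cast_nonneg a)
  have hC0 : 0 ≤ C := by positivity
  set A := (Finset.Icc 1 ⌊Real.exp R⌋₊).filter fun a : ℕ =>
    Real.exp (R / 2) ≤ a ∧ ∀ p : ℕ, p.Prime → p ∣ a → (p : ℝ) ≤ Real.exp (2 * K) with hA
  have h1 := sum_le_of_card_fiber_le hf hsub (x := x) (y := Real.exp (2 * R))
    (T := C * x ^ (1 / (10 * ℓ))) (V := 2) (N := N) (A := A) (α := α) (β := β)
    (Q := fun _ => True) (by positivity)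
    (fun a ha => (Finset.mem_Icc.mp (Finset.mem_filter.mp ha).1).1) ?_ ?_
  · have h2 := sum_smooth_div_le hf hsub (w := Real.exp (2 * K)) (K := K) (t := Real.exp (R / 2))
      hK (Real.log_exp _).ge (Real.one_le_exp (by positivity)) (Real.exp_pos _)
      (Z := ⌊Real.exp R⌋₊) (A := A)
      (Finset.filter_subset _ _) (fun a ha => (Finset.mem_filter.mp ha).2)
    have h3 : x ^ (1 / (10 * ℓ)) * Real.exp (R / 2) ^ (-(K / Real.log (Real.exp (2 * K)))) ≤
        1 / Real.log x := by
      rw [Real.log_exp, ← Real.exp_mul, Real.rpow_def_of_pos hx0, ← Real.exp_add, one_div (Real.log x),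
        ← Real.exp_log (inv_pos.mpr hL0), Real.exp_le_exp, Real.log_inv]
      have e1 : K / (2 * K) = 1 / 2 := by field_simp
      have e2 : Real.log x / (8 * ℓ) ≤ R / 4 := by
        rw [div_le_iff₀ (by positivity)]
        linarith
      have e3 : Real.log x * (1 / (10 * ℓ)) = Real.log x / (8 * ℓ) - Real.log x / (40 * ℓ) := by
        field_simp
        ring
      rw [e1, e3]
      linarith
    calc ∑ n ∈ N, f n
        ≤ C * x ^ (1 / (10 * ℓ)) * 2 * Real.exp (2 * R) * ∑ a ∈ A, f a / a := h1
      _ ≤ C * x ^ (1 / (10 * ℓ)) * 2 * Real.exp (2 * R) *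
          (Real.exp (R / 2) ^ (-(K / Real.log (Real.exp (2 * K)))) *
            Real.exp (rankinExponent k K) * F) := by gcongr
      _ = 2 * C * Real.exp (2 * R) * Real.exp (rankinExponent k K) * F *
          (x ^ (1 / (10 * ℓ)) * Real.exp (R / 2) ^ (-(K / Real.log (Real.exp (2 * K))))) := by ring
      _ ≤ 2 * C * Real.exp (2 * R) * Real.exp (rankinExponent k K) * F * (1 / Real.log x) := by
          gcongr
      _ = _ := by ring
  · intro n hn
    obtain ⟨e1, e2, e3, e4, e5, e6, e7, e8⟩ := hN n hn
    have hn0 : n ≠ 0 := by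
      rintro rfl
      push_cast at e2
      linarith
    have hb0 : β n ≠ 0 := by
      intro h
      rw [h, mul_zero] at e1
      exact hn0 e1.symm
    refine ⟨e1, Finset.mem_filter.mpr ⟨Finset.mem_Icc.mpr ⟨e4, Nat.le_floor e5⟩, e6, ?_⟩,
      Nat.pos_of_ne_zero hb0, e2, e3, ?_, trivial⟩
    · intro p hp hpa
      refine (Nat.cast_le.mpr (e7 p hp hpa)).trans ?_
      rwa [← Real.log_le_iff_le_exp (by exact_mod_cast (β n).minFac_pos)]
    · have hbn : β n ≤ n := by
        conv_rhs => rw [← e1]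
        exact Nat.le_mul_of_pos_left _ e4
      have hε : 1 / (10 * ℓ) ≤ 1 := by
        rw [div_le_one (by positivity)]
        linarith
      have h2 := piltz_le_rpow_mul hk hb0 (ε := 1 / (10 * ℓ)) (by positivity) hε
      have e9 : 3 / 2 * (k : ℝ) / (1 / (10 * ℓ)) = 15 * ℓ * k := by field_simp; ring
      rw [one_div_one_div, e9] at h2
      refine h2.trans ?_
      gcongr
      exact (Nat.cast_le.mpr hbn).trans e3
  · intro a ha B hB
    obtain ⟨ha1, haR⟩ := Finset.mem_Icc.mp (Finset.mem_filter.mp ha).1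
    have ha0 : (0 : ℝ) < a := by exact_mod_cast ha1
    have hsubdiv : x / a - (x - Real.exp (2 * R)) / a = Real.exp (2 * R) / a := by ring
    rw [← hsubdiv]
    refine card_le_two_mul_of_mem_Ioc (div_nonneg (sub_nonneg.mpr hyx) ha0.le) ?_
      fun b hb => ⟨(hB b hb).1, (hB b hb).2.1⟩
    rw [hsubdiv, one_le_div ha0]
    refine ((Nat.le_floor_iff (Real.exp_pos R).le).mp haR).trans (Real.exp_le_exp.mpr ?_)
    linarith

theorem sum_short_interval_le (hk : 0 < k) (hf : ∀ n : ℕ, 1 ≤ n → 0 ≤ f n)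
    (hsub : ∀ m n : ℕ, 1 ≤ m → 1 ≤ n → f (m * n) ≤ (piltz k m : ℝ) * f n)
    {x y ℓ : ℝ} (hℓ : 1 ≤ ℓ) (hx0 : 0 < x) (hL : 6400 * ℓ ^ 2 ≤ Real.log x) (hy1 : x ^ (1 / ℓ) ≤ y)
    (hy2 : y ≤ x) :
    ∑ n ∈ (Finset.Icc 1 ⌊x⌋₊).filter (fun n : ℕ => x - y < (n : ℝ)), f n ≤
      (1 + 60 * ℓ * (k : ℝ) ^ (4 * ℓ) +
        750 * ℓ * (k : ℝ) ^ (2 * ℓ) *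
          Real.exp (rankinExponent k (4 * ℓ * Real.log k + 1 / 2)) +
        2 * (15 * ℓ * k) ^ (k * (k : ℝ) ^ (10 * ℓ)) *
          Real.exp (rankinExponent k (4 * ℓ * Real.log k + 1 / 2))) *
      (y / Real.log x) * ∑ n ∈ Finset.Icc 1 ⌊x⌋₊, f n / n := by
  classical
  set L := Real.log x with hLdef
  set K : ℝ := 4 * ℓ * Real.log k + 1 / 2 with hKdef
  set F := ∑ n ∈ Finset.Icc 1 ⌊x⌋₊, f n / n with hF
  have hK : 1 / 2 ≤ K := by
    have : 0 ≤ 4 * ℓ * Real.log k :=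
      mul_nonneg (by positivity) (Real.log_nonneg (by exact_mod_cast hk))
    linarith
  have hℓ0 : 0 < ℓ := by linarith
  have hL0 : 0 < L := by nlinarith
  have hy0 : 0 < y := (Real.rpow_pos_of_pos hx0 _).trans_le hy1
  obtain ⟨R, hyR⟩ : ∃ R, y = Real.exp (2 * R) :=
    ⟨Real.log y / 2, by rw [mul_div_cancel₀ _ two_ne_zero, Real.exp_log hy0]⟩
  have hLR : L ≤ 2 * ℓ * R := by
    have h1 := Real.log_le_log (Real.rpow_pos_of_pos hx0 _) hy1
    rw [Real.log_rpow hx0, hyR, Real.log_exp, one_div, inv_mul_le_iff₀ hℓ0] at h1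
    linarith
  have hR : 0 < R := by
    by_contra h
    push Not at h
    nlinarith
  have hloglog : Real.log L ≤ L / (40 * ℓ) := by
    have h1 := Real.log_le_sub_one_of_pos (Real.sqrt_pos.mpr hL0)
    rw [Real.log_sqrt hL0.le] at h1
    have h2 : 80 * ℓ ≤ √L := Real.le_sqrt_of_sq_le (by nlinarith)
    have h3 := Real.mul_self_sqrt hL0.le
    rw [le_div_iff₀ (by positivity)]
    have h4 : Real.log L ≤ 2 * √L := by linarith
    calc Real.log L * (40 * ℓ) ≤ 2 * √L * (40 * ℓ) := by gcongr
      _ = √L * (80 * ℓ) := by ring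
      _ ≤ √L * √L := by gcongr
      _ = L := h3
  have hLz : L ≤ Real.exp R := by
    rw [← Real.log_le_iff_le_exp hL0]
    have h1 : L / (40 * ℓ) ≤ R := by
      rw [div_le_iff₀ (by positivity)]
      nlinarith
    linarith
  subst hyR
  have hRx : Real.exp R ≤ x := (Real.exp_le_exp.mpr (by linarith)).trans hy2
  set G := ∑ a ∈ Finset.Icc 1 ⌊Real.exp R⌋₊, f a / a with hG
  have hterm : ∀ n ∈ Finset.Icc 1 ⌊x⌋₊, 0 ≤ f n / n := fun a ha =>
    div_nonneg (hf a (Finset.mem_Icc.mp ha).1) (Nat.cast_nonneg a)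
  have hF0 : 0 ≤ F := Finset.sum_nonneg hterm
  have hGF : G ≤ F := Finset.sum_le_sum_of_subset_of_nonneg
    (Finset.Icc_subset_Icc_right (Nat.floor_le_floor hRx)) fun a ha _ => hterm a ha
  have hdec : ∀ n : ℕ, ∃ a b : ℕ, Real.exp R < n → a * b = n ∧ 1 ≤ a ∧ (a : ℝ) ≤ Real.exp R ∧
      b ≠ 1 ∧ Real.exp R < a * b.minFac ∧ ∀ p : ℕ, p.Prime → p ∣ a → p ≤ b.minFac := by
    intro n
    by_cases h : Real.exp R < n
    · obtain ⟨a, b, hab⟩ := exists_smooth_mul_rough (Real.one_le_exp hR.le) h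
      exact ⟨a, b, fun _ => hab⟩
    · exact ⟨0, 0, fun h' => absurd h' h⟩
  choose α β hαβ using hdec
  have hlarge : ∀ n : ℕ, Real.exp R < n → Real.log (β n).minFac ≤ R / 2 →
      Real.exp (R / 2) ≤ α n := by
    intro n hn hp
    obtain ⟨-, h1, -, -, h2, -⟩ := hαβ n hn
    rw [Real.log_le_iff_le_exp (by exact_mod_cast (β n).minFac_pos)] at hp
    have h3 : Real.exp (R / 2) * Real.exp (R / 2) < α n * Real.exp (R / 2) := by
      rw [← Real.exp_add, add_halves]
      exact h2.trans_le (by gcongr)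
    exact (lt_of_mul_lt_mul_right h3 (Real.exp_pos _).le).le
  set N := (Finset.Icc 1 ⌊x⌋₊).filter (fun n : ℕ => x - Real.exp (2 * R) < (n : ℝ)) with hN
  have hNmem : ∀ n ∈ N, 1 ≤ n ∧ (n : ℝ) ≤ x ∧ x - Real.exp (2 * R) < n := fun n hn => by
    obtain ⟨h1, h2⟩ := Finset.mem_filter.mp hn
    obtain ⟨h3, h4⟩ := Finset.mem_Icc.mp h1
    exact ⟨h3, (Nat.le_floor_iff hx0.le).mp h4, h2⟩
  rw [← Finset.sum_filter_not_add_sum_filter N (fun n : ℕ => Real.exp R < n),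
    ← Finset.sum_filter_not_add_sum_filter (N.filter fun n : ℕ => Real.exp R < n)
      (fun n : ℕ => Real.log (β n).minFac ≤ R / 2),
    ← Finset.sum_filter_not_add_sum_filter
      ((N.filter fun n : ℕ => Real.exp R < n).filter fun n : ℕ => Real.log (β n).minFac ≤ R / 2)
      (fun n : ℕ => Real.log (β n).minFac ≤ 2 * K)]
  have hsmall : ∑ n ∈ N.filter (fun n : ℕ => ¬ Real.exp R < n), f n ≤
      Real.exp (2 * R) / L * F := by
    calc ∑ n ∈ N.filter (fun n : ℕ => ¬ Real.exp R < n), f n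
        ≤ ∑ n ∈ N.filter (fun n : ℕ => ¬ Real.exp R < n), Real.exp R * (f n / n) := by
          refine Finset.sum_le_sum fun n hn => ?_
          obtain ⟨h1, h2⟩ := Finset.mem_filter.mp hn
          push Not at h2
          have h3 : (0 : ℝ) < n := by exact_mod_cast (hNmem n h1).1
          rw [← mul_div_assoc, le_div_iff₀ h3, mul_comm]
          exact mul_le_mul_of_nonneg_right h2 (hf n (hNmem n h1).1)
      _ ≤ Real.exp R * F := by
          rw [← Finset.mul_sum]
          gcongr
          exact Finset.sum_le_sum_of_subset_of_nonneg
            ((Finset.filter_subset _ _).trans (Finset.filter_subset _ _)) fun a ha _ => hterm a ha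
      _ ≤ Real.exp (2 * R) / L * F := by
          gcongr
          rw [le_div_iff₀ hL0, two_mul, Real.exp_add]
          gcongr
  have hrough := sum_le_of_lt_log_minFac hk hf hsub (x := x) (R := R) (ℓ := ℓ) (σ := 2) hR
    (by norm_num) hy2 hLR
    (N := (N.filter fun n : ℕ => Real.exp R < n).filter
      fun n : ℕ => ¬ Real.log (β n).minFac ≤ R / 2)
    (A := Finset.Icc 1 ⌊Real.exp R⌋₊) (α := α) (β := β)
    (fun a ha => by
      obtain ⟨h3, h4⟩ := Finset.mem_Icc.mp ha
      exact ⟨h3, (Nat.le_floor_iff (Real.exp_pos R).le).mp h4⟩)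
    (fun n hn => by
      obtain ⟨h1, h2⟩ := Finset.mem_filter.mp hn
      obtain ⟨h3, h4⟩ := Finset.mem_filter.mp h1
      obtain ⟨-, h5, h6⟩ := hNmem n h3
      obtain ⟨e1, e2, e3, -, -, -⟩ := hαβ n h4
      exact ⟨e1, Finset.mem_Icc.mpr ⟨e2, Nat.le_floor e3⟩, h6, h5, not_le.mp h2⟩)
  have hmid := sum_le_of_two_mul_lt_log_minFac hk hf hsub hℓ0.le hR hy2 hLR
    (N := ((N.filter fun n : ℕ => Real.exp R < n).filter
      fun n : ℕ => Real.log (β n).minFac ≤ R / 2).filter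
      fun n : ℕ => ¬ Real.log (β n).minFac ≤ 2 * K) (α := α) (β := β)
    (fun n hn => by
      obtain ⟨h1, h2⟩ := Finset.mem_filter.mp hn
      obtain ⟨h3, h4⟩ := Finset.mem_filter.mp h1
      obtain ⟨h5, h6⟩ := Finset.mem_filter.mp h3
      obtain ⟨-, h7, h8⟩ := hNmem n h5
      obtain ⟨e1, e2, e3, -, -, e4⟩ := hαβ n h6
      exact ⟨e1, h8, h7, e2, e3, hlarge n h6 h4, e4, not_le.mp h2, h4⟩)
  have hlow := sum_le_of_log_minFac_le hk hf hsub hℓ hK hR hy2 hLR hloglog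
    (N := ((N.filter fun n : ℕ => Real.exp R < n).filter
      fun n : ℕ => Real.log (β n).minFac ≤ R / 2).filter
      fun n : ℕ => Real.log (β n).minFac ≤ 2 * K) (α := α) (β := β)
    (fun n hn => by
      obtain ⟨h1, h2⟩ := Finset.mem_filter.mp hn
      obtain ⟨h3, h4⟩ := Finset.mem_filter.mp h1
      obtain ⟨h5, h6⟩ := Finset.mem_filter.mp h3
      obtain ⟨-, h7, h8⟩ := hNmem n h5
      obtain ⟨e1, e2, e3, -, -, e4⟩ := hαβ n h6
      exact ⟨e1, h8, h7, e2, e3, hlarge n h6 h4, e4, h2⟩)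
  have hmono : ∀ c : ℝ, 0 ≤ c → c * (Real.exp (2 * R) / L) * G ≤
      c * (Real.exp (2 * R) / L) * F := fun c hc => by gcongr
  have hrough' := hrough.trans (hmono _ (by positivity))
  have hmid' := hmid.trans (hmono _ (by positivity))
  have hlow' := hlow.trans (hmono _ (by positivity))
  have e4 : 2 * ℓ * 2 = 4 * ℓ := by ring
  rw [e4] at hrough'
  refine (add_le_add hsmall (add_le_add hrough' (add_le_add hmid' hlow'))).trans (le_of_eq ?_)
  ring

end ShortSums

section Constants

variable {k : ℕ} {ℓ : ℝ}

theorem rankinExponent_le (hℓ : 0 ≤ ℓ) (hk : 0 < k) :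
    rankinExponent k (4 * ℓ * Real.log k + 1 / 2) ≤
      14 / 5 * (7 / 2) ^ k * ((k : ℝ) ^ (4 * ℓ)) ^ 2 := by
  have hk0 : (0 : ℝ) < k := by exact_mod_cast hk
  have hk1 : (1 : ℝ) ≤ k := by exact_mod_cast hk
  have hhalf : Real.exp (1 / 2) ≤ 5 / 3 := by
    have h1 : Real.exp (1 / 2) * Real.exp (1 / 2) = Real.exp 1 := by rw [← Real.exp_add]; norm_num
    have h2 := Real.exp_one_lt_d9
    nlinarith [Real.exp_pos (1 / 2 : ℝ)]
  set Q := (k : ℝ) ^ (4 * ℓ) with hQ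
  have hQ1 : 1 ≤ Q := Real.one_le_rpow hk1 (by positivity)
  have hlog : 4 * ℓ * Real.log k = Real.log Q := (Real.log_rpow hk0 _).symm
  have hlogle := Real.log_le_sub_one_of_pos (show 0 < Q by linarith)
  have hlog0 := Real.log_nonneg hQ1
  rw [rankinExponent, hlog, Real.exp_add, Real.exp_log (by linarith)]
  calc 7 / 5 * (7 / 2 : ℝ) ^ k * ((Real.log Q + 1 / 2 + 7 / 10) * (Q * Real.exp (1 / 2)))
      ≤ 7 / 5 * (7 / 2 : ℝ) ^ k * ((6 / 5 * Q) * (Q * (5 / 3))) := by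
        gcongr
        linarith
    _ = 14 / 5 * (7 / 2) ^ k * Q ^ 2 := by ring

theorem natCast_pow_three_le (k : ℕ) : (k : ℝ) ^ 3 ≤ 8 ^ k := by
  have h : (k : ℝ) ≤ 2 ^ k := by exact_mod_cast Nat.lt_two_pow_self.le
  calc (k : ℝ) ^ 3 ≤ (2 ^ k) ^ 3 := by gcongr
    _ = 8 ^ k := by rw [← pow_mul, mul_comm, pow_mul]; norm_num

theorem pow_mul_le_Ak (hk : 0 < k) : 1092 * (125 / 8) ^ k ≤ Ak k := by
  have hk0 : (0 : ℝ) < k := by exact_mod_cast hk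
  rw [Ak, le_div_iff₀ (by positivity)]
  calc 1092 * (125 / 8 : ℝ) ^ k * (k : ℝ) ^ 3 ≤ 1092 * (125 / 8 : ℝ) ^ k * 8 ^ k := by
        gcongr
        exact natCast_pow_three_le k
    _ = 125 ^ k * 1092 := by rw [mul_assoc, ← mul_pow]; norm_num; ring

theorem one_le_Ak (hk : 0 < k) : 1 ≤ Ak k := by
  have h1 : (1 : ℝ) ≤ (125 / 8) ^ k := one_le_pow₀ (by norm_num)
  linarith [pow_mul_le_Ak hk]

theorem Ckl_nonneg (hℓ : 0 ≤ ℓ) (hk : 0 < k) : 0 ≤ Ckl k ℓ := by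
  have hk1 : (1 : ℝ) ≤ k := by exact_mod_cast hk
  exact Real.rpow_nonneg (mul_nonneg (by positivity) (by linarith)) _

theorem Ak_mul_max_le_Dkl (hk : 0 < k) :
    Ak k * max (Ak k) (2 * (k : ℝ) ^ (5 * ℓ * Ak k)) ≤ Dkl k ℓ := by
  have hA : 0 ≤ Ak k := zero_le_one.trans (one_le_Ak hk)
  have h : 0 ≤ (2 * Ak k) ^ (-(Ak k) / 4) * Real.exp (Bkl k ℓ / Real.exp 1) *
      (k : ℝ) ^ (5 * ℓ * Bkl k ℓ) * (if Ak k < Bkl k ℓ then 1 else 0) :=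
    mul_nonneg (by positivity) (by split_ifs <;> norm_num)
  rw [Dkl]
  linarith

theorem Ak_sq_le_Lam_one (hℓ : 1 ≤ ℓ) : 9 * ℓ * Ak 1 ^ 2 ≤ Lam 1 ℓ := by
  have hA := one_le_Ak (k := 1) one_pos
  have h1 := Ak_mul_max_le_Dkl (k := 1) (ℓ := ℓ) one_pos
  have h2 := Ckl_nonneg (k := 1) (ℓ := ℓ) (by linarith) one_pos
  have h3 : Ak 1 ^ 2 ≤ Dkl 1 ℓ := by
    refine le_trans ?_ h1
    rw [sq]
    gcongr
    exact le_max_left _ _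
  rw [Lam]
  have h4 : 9 * ℓ * Ak 1 ^ 2 ≤ 9 * ℓ * Dkl 1 ℓ := by gcongr
  have h5 : 0 ≤ 12 * ℓ * ((1 : ℕ) : ℝ) ^ (6 * ℓ) := by positivity
  have h6 : 0 ≤ 5 * ℓ * Ckl 1 ℓ := by positivity
  linarith

theorem exp_max_le_Lam (hℓ : 1 ≤ ℓ) (hk : 2 ≤ k) :
    5 * ℓ * Real.exp (2 * max (Ak k) ((k : ℝ) ^ (16 * ℓ))) ≤ Lam k ℓ := by
  have hk2 : (2 : ℝ) ≤ k := by exact_mod_cast hk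
  have hA := one_le_Ak (k := k) (by lia)
  have hD := Ak_mul_max_le_Dkl (k := k) (ℓ := ℓ) (by lia)
  have hC0 := Ckl_nonneg (k := k) (ℓ := ℓ) (by linarith) (by lia)
  have hD0 : 0 ≤ Dkl k ℓ := le_trans (mul_nonneg (by linarith) (le_max_of_le_left (by linarith))) hD
  have h5 : 0 ≤ 12 * ℓ * (k : ℝ) ^ (6 * ℓ) := by positivity
  have he2 : Real.exp 2 ≤ 10 := by
    have h1 : Real.exp 2 = Real.exp 1 * Real.exp 1 := by rw [← Real.exp_add]; norm_num
    nlinarith [Real.exp_one_lt_d9, Real.exp_pos 1]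
  suffices h : Real.exp (2 * max (Ak k) ((k : ℝ) ^ (16 * ℓ))) ≤ Ckl k ℓ ∨
      Real.exp (2 * max (Ak k) ((k : ℝ) ^ (16 * ℓ))) ≤ Dkl k ℓ by
    rw [Lam]
    rcases h with h | h
    · have := mul_le_mul_of_nonneg_left h (show 0 ≤ 5 * ℓ by positivity)
      have : 0 ≤ 9 * ℓ * Dkl k ℓ := by positivity
      linarith
    · have := mul_le_mul_of_nonneg_left h (show 0 ≤ 5 * ℓ by positivity)
      have : 0 ≤ ℓ * Dkl k ℓ := by positivity
      have : 0 ≤ 5 * ℓ * Ckl k ℓ := by positivity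
      linarith
  rcases le_total (Ak k) ((k : ℝ) ^ (16 * ℓ)) with h | h
  · left
    rw [max_eq_right h, Ckl, Real.exp_mul]
    set P := (k : ℝ) ^ (16 * ℓ) with hP
    have hP0 : 0 ≤ P := by positivity
    have hbase : 10 ≤ 10 * ℓ * ((k : ℝ) - 1) := by nlinarith
    calc Real.exp 2 ^ P ≤ (10 * ℓ * ((k : ℝ) - 1)) ^ P := by
          gcongr
          linarith
      _ ≤ _ := Real.rpow_le_rpow_of_exponent_le (by linarith) (by nlinarith)
  · right
    rw [max_eq_left h]
    refine le_trans ?_ hD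
    have h32 : (10 : ℝ) ≤ 2 ^ (5 : ℝ) := by norm_num
    calc Real.exp (2 * Ak k) = Real.exp 2 ^ Ak k := Real.exp_mul _ _
      _ ≤ (2 ^ (5 : ℝ)) ^ Ak k := by
          gcongr
          linarith
      _ = 2 ^ (5 * Ak k) := by rw [← Real.rpow_mul (by norm_num)]
      _ ≤ (k : ℝ) ^ (5 * Ak k) := by gcongr
      _ ≤ (k : ℝ) ^ (5 * ℓ * Ak k) :=
          Real.rpow_le_rpow_of_exponent_le (by linarith) (by nlinarith)
      _ ≤ 2 * (k : ℝ) ^ (5 * ℓ * Ak k) := by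
          have : 0 ≤ (k : ℝ) ^ (5 * ℓ * Ak k) := by positivity
          linarith
      _ ≤ max (Ak k) (2 * (k : ℝ) ^ (5 * ℓ * Ak k)) := le_max_right _ _
      _ ≤ Ak k * max (Ak k) (2 * (k : ℝ) ^ (5 * ℓ * Ak k)) :=
          le_mul_of_one_le_left (le_max_of_le_left (by linarith)) hA

theorem rpow_le_exp_half_rpow (hℓ : 1 ≤ ℓ) (hk : 2 ≤ k) :
    (15 * ℓ * k) ^ (k * (k : ℝ) ^ (10 * ℓ)) ≤ Real.exp ((k : ℝ) ^ (16 * ℓ) / 2) := by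
  have hk2 : (2 : ℝ) ≤ k := by exact_mod_cast hk
  have hk0 : (0 : ℝ) < k := by linarith
  have h15 : Real.log 15 ≤ 3 := by
    rw [Real.log_le_iff_le_exp (by norm_num)]
    have h1 : Real.exp 3 = Real.exp 1 ^ 3 := by rw [← Real.exp_nat_mul]; norm_num
    have h2 : (2.7 : ℝ) ^ 3 ≤ Real.exp 1 ^ 3 := by
      gcongr
      linarith [Real.exp_one_gt_d9]
    rw [h1]
    refine le_trans ?_ h2
    norm_num
  have hlog : Real.log (15 * ℓ * k) ≤ k * (1 + ℓ) := by
    rw [Real.log_mul (by positivity) hk0.ne', Real.log_mul (by norm_num) (by positivity)]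
    have h1 := Real.log_le_sub_one_of_pos (show 0 < ℓ by linarith)
    have h2 := Real.log_le_sub_one_of_pos hk0
    nlinarith
  have hpow : 2 * (1 + ℓ) ≤ (k : ℝ) ^ (6 * ℓ - 2) := by
    have h1 := one_add_mul_self_le_rpow_one_add (s := 3) (by norm_num) (p := 3 * ℓ - 1)
      (by linarith)
    have h2 : (1 + 3 : ℝ) ^ (3 * ℓ - 1) = 2 ^ (6 * ℓ - 2) := by
      have e1 : (1 + 3 : ℝ) = 2 ^ (2 : ℝ) := by norm_num
      rw [e1, ← Real.rpow_mul (by norm_num)]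
      ring_nf
    calc 2 * (1 + ℓ) ≤ 1 + (3 * ℓ - 1) * 3 := by linarith
      _ ≤ 2 ^ (6 * ℓ - 2) := h1.trans h2.le
      _ ≤ (k : ℝ) ^ (6 * ℓ - 2) := by
          gcongr
          linarith
  rw [Real.rpow_def_of_pos (by positivity), Real.exp_le_exp]
  calc Real.log (15 * ℓ * k) * (k * (k : ℝ) ^ (10 * ℓ))
      ≤ k * ((k : ℝ) ^ (6 * ℓ - 2) / 2) * (k * (k : ℝ) ^ (10 * ℓ)) := by
        gcongr
        refine hlog.trans ?_
        gcongr
        linarith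
    _ = ((k : ℝ) ^ (6 * ℓ - 2) * (k : ℝ) ^ (2 : ℝ)) * (k : ℝ) ^ (10 * ℓ) / 2 := by
        rw [Real.rpow_two]
        ring
    _ = (k : ℝ) ^ (16 * ℓ) / 2 := by
        rw [← Real.rpow_add hk0, ← Real.rpow_add hk0]
        ring_nf

theorem constants_le_Lam (hℓ : 1 ≤ ℓ) (hk : 0 < k) :
    1 + 60 * ℓ * (k : ℝ) ^ (4 * ℓ) +
        750 * ℓ * (k : ℝ) ^ (2 * ℓ) *
          Real.exp (rankinExponent k (4 * ℓ * Real.log k + 1 / 2)) +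
        2 * (15 * ℓ * k) ^ (k * (k : ℝ) ^ (10 * ℓ)) *
          Real.exp (rankinExponent k (4 * ℓ * Real.log k + 1 / 2)) ≤ Lam k ℓ := by
  have hE := rankinExponent_le (k := k) (ℓ := ℓ) (by linarith) hk
  set E := rankinExponent k (4 * ℓ * Real.log k + 1 / 2) with hEdef
  rcases (show 1 ≤ k from hk).eq_or_lt with rfl | hk2
  · refine le_trans ?_ (Ak_sq_le_Lam_one hℓ)
    have hA : Ak 1 = 136500 := by norm_num [Ak]
    have hE10 : Real.exp E ≤ 60000 := by
      have h1 : Real.exp E ≤ Real.exp 10 := by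
        refine Real.exp_le_exp.mpr (hE.trans ?_)
        norm_num
      have h2 : Real.exp 10 = Real.exp 1 ^ 10 := by rw [← Real.exp_nat_mul]; norm_num
      have h3 : Real.exp 1 ^ 10 ≤ 3 ^ 10 := by
        gcongr
        linarith [Real.exp_one_lt_d9]
      norm_num at h3
      linarith
    rw [hA]
    simp only [Nat.cast_one, Real.one_rpow, mul_one, Real.rpow_one]
    nlinarith [mul_le_mul_of_nonneg_left hE10 (show 0 ≤ ℓ by linarith)]
  · refine le_trans ?_ (exp_max_le_Lam hℓ hk2)
    have hC := rpow_le_exp_half_rpow hℓ hk2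
    set C : ℝ := (15 * ℓ * k) ^ (k * (k : ℝ) ^ (10 * ℓ)) with hCdef
    set X := max (Ak k) ((k : ℝ) ^ (16 * ℓ)) with hX
    set Q := (k : ℝ) ^ (4 * ℓ) with hQ
    have hk2' : (2 : ℝ) ≤ k := by exact_mod_cast hk2
    have hk0 : (0 : ℝ) < k := by linarith
    have hQ16 : 16 ≤ Q := by
      calc (16 : ℝ) = 2 ^ (4 : ℝ) := by norm_num
        _ ≤ (k : ℝ) ^ (4 : ℝ) := by gcongr
        _ ≤ Q := Real.rpow_le_rpow_of_exponent_le (by linarith) (by linarith)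
    have hP : (k : ℝ) ^ (16 * ℓ) = Q ^ 4 := by
      rw [hQ, ← Real.rpow_mul_natCast hk0.le]
      congr 1
      push_cast
      ring
    have hAX : Ak k ≤ X := le_max_left _ _
    have hPX : Q ^ 4 ≤ X := hP ▸ le_max_right _ _
    have hQX : Q ≤ X := (le_self_pow₀ (by linarith) (by norm_num)).trans hPX
    have hX6 : 65536 ≤ X := by
      refine le_trans ?_ hPX
      calc (65536 : ℝ) = 16 ^ 4 := by norm_num
        _ ≤ Q ^ 4 := by gcongr
    have h2Q : (k : ℝ) ^ (2 * ℓ) ≤ Q :=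
      Real.rpow_le_rpow_of_exponent_le (by linarith) (by linarith)
    have hEX : E ≤ X / 4 := by
      refine hE.trans (pow_le_pow_iff_left₀ (by positivity) (by linarith) two_ne_zero |>.mp ?_)
      have h1 := (pow_mul_le_Ak hk).trans hAX
      calc (14 / 5 * (7 / 2 : ℝ) ^ k * Q ^ 2) ^ 2 = 196 / 25 * (49 / 4) ^ k * Q ^ 4 := by
            rw [show (49 / 4 : ℝ) = (7 / 2) ^ 2 by norm_num, ← pow_mul, mul_comm 2 k, pow_mul]
            ring
        _ ≤ 1092 / 16 * (125 / 8) ^ k * Q ^ 4 := by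
            gcongr ?_ * ?_ * _
            · norm_num
            · exact pow_le_pow_left₀ (by norm_num) (by norm_num) k
        _ = 1092 * (125 / 8) ^ k * Q ^ 4 / 16 := by ring
        _ ≤ X * X / 16 := by gcongr
        _ = (X / 4) ^ 2 := by ring
    have hquad : 750 * X ≤ Real.exp (X / 2) := by
      have := Real.quadratic_le_exp_of_nonneg (show 0 ≤ X / 2 by linarith)
      nlinarith
    have hexp : ∀ {u : ℝ}, u ≤ 2 * X → Real.exp u ≤ Real.exp (2 * X) := fun h =>
      Real.exp_le_exp.mpr h
    have t1 : 1 ≤ ℓ * Real.exp (2 * X) :=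
      one_le_mul_of_one_le_of_one_le hℓ (Real.one_le_exp (by linarith))
    have t2 : 60 * ℓ * Q ≤ ℓ * Real.exp (2 * X) := by
      have := hexp (show X / 2 ≤ 2 * X by linarith)
      calc 60 * ℓ * Q = ℓ * (60 * Q) := by ring
        _ ≤ ℓ * Real.exp (2 * X) := by
          gcongr
          linarith
    have t3 : 750 * ℓ * (k : ℝ) ^ (2 * ℓ) * Real.exp E ≤ ℓ * Real.exp (2 * X) := by
      calc 750 * ℓ * (k : ℝ) ^ (2 * ℓ) * Real.exp E
          ≤ 750 * ℓ * X * Real.exp (X / 4) := by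
            gcongr
            exact h2Q.trans hQX
        _ = ℓ * (750 * X * Real.exp (X / 4)) := by ring
        _ ≤ ℓ * (Real.exp (X / 2) * Real.exp (X / 4)) := by gcongr
        _ ≤ ℓ * Real.exp (2 * X) := by
            rw [← Real.exp_add]
            gcongr
            linarith
    have t4 : 2 * C * Real.exp E ≤ 2 * ℓ * Real.exp (2 * X) := by
      calc 2 * C * Real.exp E ≤ 2 * Real.exp (X / 2) * Real.exp (X / 4) := by
            gcongr
            refine hC.trans (Real.exp_le_exp.mpr ?_)
            rw [hP]
            linarith
        _ = 2 * 1 * Real.exp (X / 2 + X / 4) := by rw [Real.exp_add]; ring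
        _ ≤ 2 * ℓ * Real.exp (2 * X) := by
            gcongr
            linarith
    linarith

theorem mul_sq_le_log_of_exp_le (hℓ : 1 ≤ ℓ) {x : ℝ}
    (hx : Real.exp (7 ^ 28 * (12 * Real.exp 1 * ℓ) ^
      (28 * Real.log (192 * Real.exp 1 * ℓ))) ≤ x) : 6400 * ℓ ^ 2 ≤ Real.log x := by
  have he : 1 ≤ Real.exp 1 := Real.one_le_exp (by norm_num)
  have hbase : ℓ ≤ 12 * Real.exp 1 * ℓ := le_mul_of_one_le_left (by linarith) (by linarith)
  have hexponent : 2 ≤ 28 * Real.log (192 * Real.exp 1 * ℓ) := by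
    have h1 : 1 ≤ Real.log (192 * Real.exp 1 * ℓ) := by
      rw [Real.le_log_iff_exp_le (by positivity)]
      nlinarith
    linarith
  rw [← Real.le_log_iff_exp_le ((Real.exp_pos _).trans_le hx)] at hx
  refine le_trans ?_ hx
  calc 6400 * ℓ ^ 2 ≤ 7 ^ 28 * ℓ ^ (2 : ℝ) := by
        rw [Real.rpow_two]
        gcongr
        norm_num
    _ ≤ 7 ^ 28 * (12 * Real.exp 1 * ℓ) ^ (2 : ℝ) := by gcongr
    _ ≤ _ := by
        gcongr
        linarith

end Constants

/-- Main Theorem: explicit bound for short sums of arithmetic functions `f`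
satisfying `f (m n) ≤ τ_k (m) f (n)`. -/
theorem statement_0 (ℓ : ℝ) (hℓ : 1 ≤ ℓ) (k : ℕ) (hk : 0 < k)
    (f : ℕ → ℝ) (hf : ∀ n : ℕ, 1 ≤ n → 0 ≤ f n)
    (hsub : ∀ m n : ℕ, 1 ≤ m → 1 ≤ n → f (m * n) ≤ (piltz k m : ℝ) * f n)
    (x y : ℝ)
    (hx : Real.exp (7 ^ 28 * (12 * Real.exp 1 * ℓ) ^
            (28 * Real.log (192 * Real.exp 1 * ℓ))) ≤ x)
    (hy1 : x ^ (1 / ℓ) ≤ y) (hy2 : y ≤ x) :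
    ∑ n ∈ (Finset.Icc 1 ⌊x⌋₊).filter (fun n : ℕ => x - y < (n : ℝ)), f n ≤
      Lam k ℓ * (y / Real.log x) * ∑ n ∈ Finset.Icc 1 ⌊x⌋₊, f n / n := by
  have hx0 : 0 < x := (Real.exp_pos _).trans_le hx
  have hL := mul_sq_le_log_of_exp_le hℓ hx
  have hL0 : 0 ≤ Real.log x := le_trans (by positivity) hL
  have hy0 : 0 ≤ y := (Real.rpow_nonneg hx0.le _).trans hy1
  have hF : 0 ≤ ∑ n ∈ Finset.Icc 1 ⌊x⌋₊, f n / n :=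
    Finset.sum_nonneg fun n hn => div_nonneg (hf n (Finset.mem_Icc.mp hn).1) (Nat.cast_nonneg n)
  refine (sum_short_interval_le hk hf hsub hℓ hx0 hL hy1 hy2).trans ?_
  gcongr
  exact constants_le_Lam hℓ hk
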